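/- arXiv:1701.07682 — 3 statements merged into one kernel-verified Lean document; each statement's English description precedes it below -/
import Mathlib

section
/- Let λ be a real number with λ > -1/2 and let n ≥ 1 be a natural number. Then (c_n(λ))² = μ_max(B_n), where μ_max(B_n) is the largest eigenvalue of the symmetric positive definite matrix B_n. -/
open Polynomial Filter

/-- The weighted `L_2` norm with the Gegenbauer weight `w_lam(t) = (1-t^2)^(lam-1/2)`. -/
noncomputable def gegNorm (lam : ℝ) (f : ℝ → ℝ) : ℝ :=
  (∫ x in (-1:ℝ)..1, (f x) ^ 2 * (1 - x ^ 2) ^ (lam - 1/2)) ^ ((1:ℝ)/2)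

/-- The best Markov constant `c_n(lam)` in `‖p'‖ ≤ c_n(lam) ‖p‖` for polynomials of degree ≤ n. -/
noncomputable def markovConst (lam : ℝ) (n : ℕ) : ℝ :=
  sSup { r : ℝ | ∃ p : Polynomial ℝ, p ≠ 0 ∧ p.natDegree ≤ n ∧
    r = gegNorm lam (fun x => (Polynomial.derivative p).eval x) /
        gegNorm lam (fun x => p.eval x) }
/-- `h_x^2 = Γ(x+2λ)/((x+λ)Γ(x+1))`. -/
noncomputable def hsq (lam x : ℝ) : ℝ :=
  Real.Gamma (x + 2*lam) / ((x + lam) * Real.Gamma (x + 1))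

/-- `α_k = (2k-1+λ) h_{2k-1}`. -/
noncomputable def gegAlpha (lam : ℝ) (k : ℕ) : ℝ :=
  (2*(k:ℝ) - 1 + lam) * Real.sqrt (hsq lam (2*(k:ℝ) - 1))

/-- `β_k = 1/h_{2k}`. -/
noncomputable def gegBeta (lam : ℝ) (k : ℕ) : ℝ :=
  1 / Real.sqrt (hsq lam (2*(k:ℝ)))

/-- `α̃_k^2 = ((2k-2+λ) h_{2k-2})^2`, with `α̃_1^2 = λΓ(2λ) = Γ(2λ+1)/2`. -/
noncomputable def gegAlphaTildeSq (lam : ℝ) (k : ℕ) : ℝ :=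
  if k = 1 then Real.Gamma (2*lam + 1) / 2
  else (2*(k:ℝ) - 2 + lam)^2 * hsq lam (2*(k:ℝ) - 2)

/-- `β̃_k = 1/h_{2k-1}`. -/
noncomputable def gegBetaTilde (lam : ℝ) (k : ℕ) : ℝ :=
  1 / Real.sqrt (hsq lam (2*(k:ℝ) - 1))

/-- The matrix `A_m` with entries `a_{kj} = (Σ_{i=1}^{min(k,j)} α_i^2) β_k β_j` (1-based). -/
noncomputable def Amat (lam : ℝ) (m : ℕ) : Matrix (Fin m) (Fin m) ℝ :=
  fun k j => (∑ i ∈ Finset.Icc 1 (min (k.val+1) (j.val+1)), (gegAlpha lam i)^2) *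
    gegBeta lam (k.val+1) * gegBeta lam (j.val+1)

/-- The matrix `Ã_m` with entries `ã_{kj} = (Σ_{i=1}^{min(k,j)} α̃_i^2) β̃_k β̃_j` (1-based). -/
noncomputable def AmatTilde (lam : ℝ) (m : ℕ) : Matrix (Fin m) (Fin m) ℝ :=
  fun k j => (∑ i ∈ Finset.Icc 1 (min (k.val+1) (j.val+1)), gegAlphaTildeSq lam i) *
    gegBetaTilde lam (k.val+1) * gegBetaTilde lam (j.val+1)

/-- `B_n = 4 A_m` for `n = 2m` and `B_n = 4 Ã_m` for `n = 2m-1`; in both cases `m = (n+1)/2`. -/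
noncomputable def Bmat (lam : ℝ) (n : ℕ) : Matrix (Fin ((n+1)/2)) (Fin ((n+1)/2)) ℝ :=
  if n % 2 = 0 then (4:ℝ) • Amat lam ((n+1)/2) else (4:ℝ) • AmatTilde lam ((n+1)/2)

/-- Maximum absolute row-sum norm. -/
noncomputable def rowSumNorm {m : ℕ} (A : Matrix (Fin m) (Fin m) ℝ) : ℝ :=
  ⨆ k, ∑ j, |A k j|

/-- Squared Frobenius norm. -/
noncomputable def frobSq {m : ℕ} (A : Matrix (Fin m) (Fin m) ℝ) : ℝ :=
  ∑ k, ∑ j, (A k j)^2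

/-!
With respect to orthonormal Gegenbauer polynomials of degrees `1, …, n`, the form `∫ p'² w` has the
Gram matrix `G` whose entry at degrees `i + 1, j + 1` vanishes unless `i` and `j` have the same
parity. Hence `G` splits into an odd and an even block, and `Bmat lam n` is the block containing
degree `n`. Every entry of the other block is bounded by the entry of this block one degree higher,
and all entries are nonnegative, so replacing `v` by `|v|` shows that the other block has no larger
Rayleigh quotient.

The entries of `G` come from the derivatives `S_{n+1}' = 2 (n + 1 + λ) C_n^{(λ+1)}` of the
polynomials `S_n = ((n + λ) / λ) C_n^{(λ)} = C_n^{(λ+1)} - C_{n-2}^{(λ+1)}`: as `S_m` is orthogonal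
to all lower degrees, `⟨C_n^{(λ+1)}, C_m^{(λ+1)}⟩` with `n ≤ m` depends only on `n` and the parity
of `m - n`. All orthogonality relations are consequences of the Pearson equation of the weight.
-/

open Matrix

/-- The values taken by the Rayleigh quotient `v ⬝ᵥ A *ᵥ v / v ⬝ᵥ v`, through whose upper bounds the
largest eigenvalues of different matrices are compared. -/
def rayleighValues {ι : Type*} [Fintype ι] (A : Matrix ι ι ℝ) : Set ℝ :=
  {r | ∃ v : ι → ℝ, v ≠ 0 ∧ v ⬝ᵥ A *ᵥ v = r * (v ⬝ᵥ v)}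

section Rayleigh

variable {ι κ α : Type*} [Fintype ι] [Fintype κ] {A : Matrix ι ι ℝ}
  {B : Matrix κ κ ℝ} {μ : ℝ}

theorem dotProduct_self_pos {v : ι → ℝ} (hv : v ≠ 0) : 0 < v ⬝ᵥ v :=
  dotProduct_star_self_pos_iff.2 hv

theorem mem_upperBounds_rayleighValues :
    μ ∈ upperBounds (rayleighValues A) ↔ ∀ v : ι → ℝ, v ⬝ᵥ A *ᵥ v ≤ μ * (v ⬝ᵥ v) := by
  refine ⟨fun h v => ?_, ?_⟩
  · rcases eq_or_ne v 0 with rfl | hv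
    · simp
    · rw [← div_le_iff₀ (dotProduct_self_pos hv)]
      exact h ⟨v, hv, (div_mul_cancel₀ _ (dotProduct_self_pos hv).ne').symm⟩
  · rintro h r ⟨v, hv, hr⟩
    exact le_of_mul_le_mul_right (hr ▸ h v) (dotProduct_self_pos hv)

theorem mem_rayleighValues_of_mulVec_eq {v : ι → ℝ} (hv : v ≠ 0) (h : A *ᵥ v = μ • v) :
    μ ∈ rayleighValues A :=
  ⟨v, hv, by rw [h, dotProduct_smul, smul_eq_mul]⟩

open scoped MatrixOrder in
theorem exists_isGreatest_rayleighValues [Nonempty ι] (hA : A.IsHermitian) :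
    ∃ μ, IsGreatest (rayleighValues A) μ ∧
      IsGreatest {μ | ∃ v : ι → ℝ, v ≠ 0 ∧ A *ᵥ v = μ • v} μ := by
  classical
  obtain ⟨i, hi⟩ := Finite.exists_max hA.eigenvalues
  have heigen : A *ᵥ (hA.eigenvectorBasis i).ofLp =
      hA.eigenvalues i • (hA.eigenvectorBasis i).ofLp := hA.mulVec_eigenvectorBasis i
  have hne : (hA.eigenvectorBasis i).ofLp ≠ 0 := by
    simpa using hA.eigenvectorBasis.orthonormal.ne_zero i
  have hbound : hA.eigenvalues i ∈ upperBounds (rayleighValues A) := by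
    have hle : A ≤ algebraMap ℝ _ (hA.eigenvalues i) :=
      le_algebraMap_of_spectrum_le (ha := hA) fun x hx => by
        obtain ⟨j, rfl⟩ := hA.spectrum_real_eq_range_eigenvalues ▸ hx
        exact hi j
    refine mem_upperBounds_rayleighValues.2 fun v => ?_
    have := (Matrix.le_iff.1 hle).dotProduct_mulVec_nonneg v
    simpa [sub_mulVec, Algebra.algebraMap_eq_smul_one, smul_mulVec] using this
  refine ⟨hA.eigenvalues i, ⟨mem_rayleighValues_of_mulVec_eq hne heigen, hbound⟩,
    ⟨_, hne, heigen⟩, ?_⟩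
  rintro μ ⟨v, hv, hμ⟩
  exact hbound (mem_rayleighValues_of_mulVec_eq hv hμ)

theorem dotProduct_extend_zero (f : ι ↪ κ) (v : ι → ℝ) (w : κ → ℝ) :
    Function.extend f v 0 ⬝ᵥ w = v ⬝ᵥ (w ∘ f) :=
  (Fintype.sum_of_injective f f.injective _ _
    (fun k hk => by simp [Function.extend_apply' _ _ _ (by simpa using hk)])
    fun i => by simp [f.injective.extend_apply]).symm

theorem mulVec_extend_zero_comp (f : ι ↪ κ) (v : ι → ℝ) :
    (B *ᵥ Function.extend f v 0) ∘ f = B.submatrix f f *ᵥ v := by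
  ext i
  rw [Function.comp_apply, mulVec, dotProduct_comm, dotProduct_extend_zero, dotProduct_comm]
  rfl

theorem rayleighValues_submatrix_subset (f : ι ↪ κ) :
    rayleighValues (B.submatrix f f) ⊆ rayleighValues B := by
  rintro r ⟨v, hv, hr⟩
  refine ⟨Function.extend f v 0, fun h => hv ?_, ?_⟩
  · rw [← Function.extend_comp f.injective v, h, Pi.zero_comp]
  · rw [dotProduct_extend_zero, dotProduct_extend_zero, mulVec_extend_zero_comp,
      Function.extend_comp f.injective, hr]

theorem mem_upperBounds_rayleighValues_of_abs_le (f : ι ↪ κ)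
    (hAB : ∀ i j, |A i j| ≤ B (f i) (f j)) (hB : μ ∈ upperBounds (rayleighValues B)) :
    μ ∈ upperBounds (rayleighValues A) := by
  rw [mem_upperBounds_rayleighValues] at hB ⊢
  intro v
  calc v ⬝ᵥ A *ᵥ v ≤ |v| ⬝ᵥ B.submatrix f f *ᵥ |v| := by
        simp only [dotProduct, mulVec, Finset.mul_sum, submatrix_apply, Pi.abs_apply]
        refine Finset.sum_le_sum fun i _ => Finset.sum_le_sum fun j _ => ?_
        calc v i * (A i j * v j) ≤ |v i| * (|A i j| * |v j|) := by
              simpa only [abs_mul] using le_abs_self (v i * (A i j * v j))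
          _ ≤ |v i| * (B (f i) (f j) * |v j|) := by gcongr; exact hAB i j
    _ = Function.extend f |v| 0 ⬝ᵥ B *ᵥ Function.extend f |v| 0 := by
        rw [dotProduct_extend_zero, mulVec_extend_zero_comp]
    _ ≤ μ * (|v| ⬝ᵥ |v|) := by
        simpa only [dotProduct_extend_zero, Function.extend_comp f.injective] using
          hB (Function.extend f |v| 0)
    _ = μ * (v ⬝ᵥ v) := by simp [dotProduct]

theorem dotProduct_mulVec_eq_sum_fiber [Fintype α] [DecidableEq α] (c : ι → α)
    (hA : ∀ i j, c i ≠ c j → A i j = 0) (v : ι → ℝ) :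
    v ⬝ᵥ A *ᵥ v = ∑ a, (fun i : {i // c i = a} => v i) ⬝ᵥ
      A.submatrix Subtype.val Subtype.val *ᵥ fun i : {i // c i = a} => v i := by
  rw [dotProduct, ← Fintype.sum_fiberwise c]
  refine Finset.sum_congr rfl fun a _ => Finset.sum_congr rfl fun i _ => ?_
  congr 1
  rw [mulVec, dotProduct, ← Fintype.sum_fiberwise c]
  refine Fintype.sum_eq_single a fun b hb => Finset.sum_eq_zero fun j _ => ?_
  rw [hA _ _ (by rw [i.2, j.2]; exact hb.symm), zero_mul]

theorem mem_upperBounds_rayleighValues_of_blocks [Finite α] [DecidableEq α] (c : ι → α)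
    (hA : ∀ i j, c i ≠ c j → A i j = 0)
    (hblock : ∀ a, μ ∈ upperBounds
      (rayleighValues (A.submatrix (fun i : {i // c i = a} => i.1) fun i => i.1))) :
    μ ∈ upperBounds (rayleighValues A) := by
  have := Fintype.ofFinite α
  simp only [mem_upperBounds_rayleighValues] at hblock ⊢
  intro v
  rw [dotProduct_mulVec_eq_sum_fiber c hA, dotProduct, ← Fintype.sum_fiberwise c, Finset.mul_sum]
  exact Finset.sum_le_sum fun a _ => hblock a fun i => v i

end Rayleigh

section Gegenbauer

variable {K : Type*} [Field K]

/-- The Gegenbauer polynomials `C_n^{(ν)}`, defined by their three-term recurrence. -/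
noncomputable def gegenbauer (ν : K) : ℕ → K[X]
  | 0 => 1
  | 1 => C (2 * ν) * X
  | n + 2 => C (2 * (n + 1 + ν) / (n + 2)) * (X * gegenbauer ν (n + 1)) -
      C ((n + 2 * ν) / (n + 2)) * gegenbauer ν n

theorem degree_gegenbauer [CharZero K] {ν : K} (hν : ∀ n : ℕ, n + ν ≠ 0) :
    ∀ n, (gegenbauer ν n).degree = n
  | 0 => degree_one
  | 1 => degree_C_mul_X (mul_ne_zero two_ne_zero (by simpa using hν 0))
  | n + 2 => by
    have hlead : 2 * (n + 1 + ν) / (n + 2) ≠ 0 := by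
      refine div_ne_zero (mul_ne_zero two_ne_zero ?_) ?_
      · exact_mod_cast hν (n + 1)
      · exact_mod_cast Nat.succ_ne_zero (n + 1)
    have hdeg : (C (2 * (n + 1 + ν) / (n + 2)) * (X * gegenbauer ν (n + 1))).degree =
        ((n + 2 : ℕ) : WithBot ℕ) := by
      rw [degree_C_mul hlead, degree_mul, degree_X, degree_gegenbauer hν (n + 1)]
      norm_cast
      omega
    rw [gegenbauer, degree_sub_eq_left_of_degree_lt, hdeg]
    calc (C ((n + 2 * ν) / (n + 2)) * gegenbauer ν n).degree ≤ (gegenbauer ν n).degree :=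
          smul_eq_C_mul (p := gegenbauer ν n) _ ▸ degree_smul_le _ _
      _ = n := degree_gegenbauer hν n
      _ < _ := by rw [hdeg]; exact_mod_cast Nat.lt_add_of_pos_right two_pos

variable [CharZero K] (ν : K) (n : ℕ)

theorem gegenbauer_recurrence :
    ((n : K[X]) + 2) * gegenbauer ν (n + 2) =
      2 * ((n : K[X]) + 1 + C ν) * X * gegenbauer ν (n + 1) -
        ((n : K[X]) + 2 * C ν) * gegenbauer ν n := by
  have h (a : K) : ((n : K[X]) + 2) * C (a / (n + 2)) = C a := by
    have hn : (n : K) + 2 ≠ 0 := by exact_mod_cast Nat.succ_ne_zero (n + 1)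
    rw [show (n : K[X]) + 2 = C ((n : K) + 2) by simp [map_ofNat], ← C_mul, mul_div_cancel₀ _ hn]
  rw [gegenbauer, mul_sub, ← mul_assoc, h, ← mul_assoc _ (C _), h]
  simp only [map_add, map_mul, map_ofNat, map_natCast, map_one]
  ring

theorem gegenbauer_derivative_relations :
    X * derivative (gegenbauer ν (n + 1)) - derivative (gegenbauer ν n) =
        ((n : K[X]) + 1) * gegenbauer ν (n + 1) ∧
      derivative (gegenbauer ν (n + 1)) - X * derivative (gegenbauer ν n) =
        ((n : K[X]) + 2 * C ν) * gegenbauer ν n := by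
  induction n with
  | zero =>
    simp only [gegenbauer, map_mul, map_ofNat, derivative_mul, derivative_ofNat, derivative_C,
      derivative_X, derivative_one, Nat.cast_zero]
    constructor <;> ring
  | succ n ih =>
    obtain ⟨hX, hone⟩ := ih
    have hrec := gegenbauer_recurrence ν n
    have hrec' := congrArg derivative hrec
    simp only [derivative_mul, derivative_sub, derivative_add, derivative_natCast,
      derivative_ofNat, derivative_one, derivative_C, derivative_X] at hrec'
    have hone' : derivative (gegenbauer ν (n + 2)) - X * derivative (gegenbauer ν (n + 1)) =
        ((n : K[X]) + 1 + 2 * C ν) * gegenbauer ν (n + 1) := by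
      have hn : (n : K[X]) + 2 ≠ 0 := by exact_mod_cast Nat.succ_ne_zero (n + 1)
      apply mul_left_cancel₀ hn
      linear_combination hrec' + ((n : K[X]) + 2 * C ν) * hX
    push_cast
    exact ⟨by linear_combination X * hone' + X * hX - hone - hrec, hone'⟩

theorem derivative_gegenbauer_add_two_sub :
    derivative (gegenbauer ν (n + 2)) - derivative (gegenbauer ν n) =
      2 * ((n : K[X]) + 1 + C ν) * gegenbauer ν (n + 1) := by
  have hone := (gegenbauer_derivative_relations ν (n + 1)).2
  push_cast at hone
  linear_combination hone + (gegenbauer_derivative_relations ν n).1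

theorem one_sub_X_sq_mul_derivative_gegenbauer :
    (1 - X ^ 2) * derivative (gegenbauer ν n) =
      ((n : K[X]) + 2 * C ν) * X * gegenbauer ν n - ((n : K[X]) + 1) * gegenbauer ν (n + 1) := by
  obtain ⟨hX, hone⟩ := gegenbauer_derivative_relations ν n
  linear_combination X * hone - hX

theorem one_sub_X_sq_mul_derivative_gegenbauer_succ :
    (1 - X ^ 2) * derivative (gegenbauer ν (n + 1)) =
      ((n : K[X]) + 2 * C ν) * gegenbauer ν n - ((n : K[X]) + 1) * X * gegenbauer ν (n + 1) := by
  obtain ⟨hX, hone⟩ := gegenbauer_derivative_relations ν n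
  linear_combination hone - X * hX

end Gegenbauer

section ScaledGegenbauer

variable {K : Type*} [Field K]

/-- The polynomials `((n + lam) / lam) • C_n^{(lam)}`, expressed through `C_n^{(lam + 1)}` so as to
make sense for `lam = 0`, where they are (for `0 < n`) twice the Chebyshev polynomials. -/
noncomputable def scaledGegenbauer (lam : K) : ℕ → K[X]
  | 0 => 1
  | 1 => gegenbauer (lam + 1) 1
  | n + 2 => gegenbauer (lam + 1) (n + 2) - gegenbauer (lam + 1) n

variable [CharZero K]

theorem degree_scaledGegenbauer {lam : K} (hlam : ∀ n : ℕ, n + (lam + 1) ≠ 0) :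
    ∀ n, (scaledGegenbauer lam n).degree = n
  | 0 => degree_one
  | 1 => degree_gegenbauer hlam 1
  | n + 2 => by
    rw [scaledGegenbauer, degree_sub_eq_left_of_degree_lt] <;> rw [degree_gegenbauer hlam]
    rw [degree_gegenbauer hlam]
    exact_mod_cast Nat.lt_add_of_pos_right two_pos

theorem derivative_scaledGegenbauer_succ (lam : K) :
    ∀ n : ℕ, derivative (scaledGegenbauer lam (n + 1)) =
      2 * ((n : K[X]) + 1 + C lam) * gegenbauer (lam + 1) n
  | 0 => by simp [scaledGegenbauer, gegenbauer, map_ofNat, add_comm]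
  | n + 1 => by
    rw [scaledGegenbauer, derivative_sub, derivative_gegenbauer_add_two_sub]
    simp only [map_add, map_one]
    push_cast
    ring

theorem scaledGegenbauer_succ_eq (lam : K) :
    ∀ n : ℕ, ((n : K[X]) + 1 + 2 * C lam) * scaledGegenbauer lam (n + 1) =
      2 * ((n : K[X]) + 1 + C lam) * (gegenbauer (lam + 1) (n + 1) - X * gegenbauer (lam + 1) n)
  | 0 => by
    simp only [scaledGegenbauer, gegenbauer, map_mul, map_add, map_ofNat, map_one, Nat.cast_zero]
    ring
  | n + 1 => by
    have hrec := gegenbauer_recurrence (lam + 1) n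
    simp only [map_add, map_one] at hrec
    rw [scaledGegenbauer]
    push_cast
    linear_combination -hrec

end ScaledGegenbauer

section Functional

variable {K : Type*} [Field K] {lam : K} {L : K[X] →ₗ[K] K} {i j m n : ℕ}

/-- The Pearson equation of the Gegenbauer weight `w = (1 - x ^ 2) ^ (lam - 1 / 2)`, that is,
`((1 - x ^ 2) w)' = -(2 * lam + 1) x w`, for a linear functional `L` in place of `∫ · w`. -/
def IsGegenbauerFunctional (lam : K) (L : K[X] →ₗ[K] K) : Prop :=
  ∀ q : K[X], L ((1 - X ^ 2) * derivative q) = (2 * lam + 1) * L (X * q)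

theorem map_C_mul_eq_mul_map (L : K[X] →ₗ[K] K) (a : K) (p : K[X]) : L (C a * p) = a * L p := by
  rw [← smul_eq_C_mul, map_smul, smul_eq_mul]

namespace IsGegenbauerFunctional

variable [CharZero K]

theorem map_scaledGegenbauer_succ_mul (hL : IsGegenbauerFunctional lam L) (n : ℕ) (q : K[X]) :
    (n + 1) * (n + 1 + 2 * lam) * L (scaledGegenbauer lam (n + 1) * q) =
      2 * (n + 1 + lam) * L ((1 - X ^ 2) * gegenbauer (lam + 1) n * derivative q) := by
  have hS := scaledGegenbauer_succ_eq lam n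
  have hD := one_sub_X_sq_mul_derivative_gegenbauer (lam + 1) n
  have hpoly : C ((n + 1) * (n + 1 + 2 * lam)) * (scaledGegenbauer lam (n + 1) * q) =
      C (2 * (n + 1 + lam)) * (C (2 * lam + 1) * (X * (gegenbauer (lam + 1) n * q)) -
        (1 - X ^ 2) * derivative (gegenbauer (lam + 1) n * q) +
        (1 - X ^ 2) * gegenbauer (lam + 1) n * derivative q) := by
    simp only [map_add, map_mul, map_natCast, map_ofNat, map_one, derivative_mul] at hD ⊢
    linear_combination ((n : K[X]) + 1) * q * hS + 2 * ((n : K[X]) + 1 + C lam) * q * hD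
  have h := congrArg L hpoly
  rw [map_C_mul_eq_mul_map, map_C_mul_eq_mul_map, map_add, map_sub, map_C_mul_eq_mul_map,
    hL] at h
  linear_combination h

theorem map_gegenbauer_succ_sq (hL : IsGegenbauerFunctional lam L) (n : ℕ) :
    (n + 1) * L (gegenbauer (lam + 1) (n + 1) ^ 2) =
      (n + 2 * lam + 2) * L (gegenbauer (lam + 1) n ^ 2) := by
  have hn := one_sub_X_sq_mul_derivative_gegenbauer (lam + 1) n
  have hsucc := one_sub_X_sq_mul_derivative_gegenbauer_succ (lam + 1) n
  have hpoly : (1 - X ^ 2) * derivative (gegenbauer (lam + 1) (n + 1) * gegenbauer (lam + 1) n) =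
      C (n + 2 * lam + 2) * gegenbauer (lam + 1) n ^ 2 -
        C ((n : K) + 1) * gegenbauer (lam + 1) (n + 1) ^ 2 +
        C (2 * lam + 1) * (X * (gegenbauer (lam + 1) (n + 1) * gegenbauer (lam + 1) n)) := by
    simp only [map_add, map_mul, map_natCast, map_ofNat, map_one, derivative_mul] at hn hsucc ⊢
    linear_combination gegenbauer (lam + 1) n * hsucc + gegenbauer (lam + 1) (n + 1) * hn
  have h := congrArg L hpoly
  rw [hL, map_add, map_sub, map_C_mul_eq_mul_map, map_C_mul_eq_mul_map,
    map_C_mul_eq_mul_map] at h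
  linear_combination h

variable (hL : IsGegenbauerFunctional lam L) (hlam : ∀ n : ℕ, (n : K) + 1 + 2 * lam ≠ 0)

include hL hlam

theorem map_scaledGegenbauer_succ (n : ℕ) : L (scaledGegenbauer lam (n + 1)) = 0 := by
  have h := map_scaledGegenbauer_succ_mul hL n 1
  rw [mul_one, derivative_one, mul_zero, map_zero, mul_zero] at h
  exact (mul_eq_zero.1 h).resolve_left (mul_ne_zero n.cast_add_one_ne_zero (hlam n))

theorem map_scaledGegenbauer_succ_mul_succ (hij : i ≠ j) :
    L (scaledGegenbauer lam (i + 1) * scaledGegenbauer lam (j + 1)) = 0 := by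
  have hswap (i j : ℕ) :
      (i + 1) * (i + 1 + 2 * lam) *
          L (scaledGegenbauer lam (i + 1) * scaledGegenbauer lam (j + 1)) =
        4 * ((i + 1 + lam) * (j + 1 + lam)) *
          L ((1 - X ^ 2) * (gegenbauer (lam + 1) i * gegenbauer (lam + 1) j)) := by
    have hpoly : (1 - X ^ 2) * gegenbauer (lam + 1) i * derivative (scaledGegenbauer lam (j + 1)) =
        C (2 * (j + 1 + lam)) *
          ((1 - X ^ 2) * (gegenbauer (lam + 1) i * gegenbauer (lam + 1) j)) := by
      rw [derivative_scaledGegenbauer_succ]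
      simp only [map_add, map_mul, map_natCast, map_ofNat, map_one]
      ring
    rw [map_scaledGegenbauer_succ_mul hL, hpoly, map_C_mul_eq_mul_map]
    ring
  have hne : ((i : K) - j) * (i + j + 1 + 1 + 2 * lam) ≠ 0 :=
    mul_ne_zero (sub_ne_zero.2 (Nat.cast_injective.ne hij)) (by exact_mod_cast hlam (i + j + 1))
  apply (mul_eq_zero.1 _).resolve_left hne
  have hji := hswap j i
  rw [mul_comm (scaledGegenbauer _ _), mul_comm (gegenbauer _ _)] at hji
  linear_combination hswap i j - hji

theorem map_scaledGegenbauer_mul_of_lt (h : n < m) :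
    L (scaledGegenbauer lam m * scaledGegenbauer lam n) = 0 := by
  obtain ⟨m, rfl⟩ := Nat.exists_eq_add_one_of_ne_zero h.ne_bot
  cases n with
  | zero => rw [scaledGegenbauer.eq_1, mul_one, map_scaledGegenbauer_succ hL hlam]
  | succ n => exact map_scaledGegenbauer_succ_mul_succ hL hlam (by omega)

theorem map_scaledGegenbauer_mul_gegenbauer_of_lt :
    ∀ {n : ℕ}, n < m → L (scaledGegenbauer lam m * gegenbauer (lam + 1) n) = 0
  | 0, h => by
    simpa only [scaledGegenbauer, gegenbauer] using
      map_scaledGegenbauer_mul_of_lt hL hlam (n := 0) h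
  | 1, h => by
    simpa only [scaledGegenbauer, gegenbauer] using
      map_scaledGegenbauer_mul_of_lt hL hlam (n := 1) h
  | n + 2, h => by
    have hsplit : gegenbauer (lam + 1) (n + 2) =
        scaledGegenbauer lam (n + 2) + gegenbauer (lam + 1) n := by
      rw [scaledGegenbauer, sub_add_cancel]
    rw [hsplit, mul_add, map_add, map_scaledGegenbauer_mul_of_lt hL hlam h,
      map_scaledGegenbauer_mul_gegenbauer_of_lt (by omega), add_zero]

theorem map_gegenbauer_mul_add_two (h : n < m + 2) :
    L (gegenbauer (lam + 1) n * gegenbauer (lam + 1) (m + 2)) =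
      L (gegenbauer (lam + 1) n * gegenbauer (lam + 1) m) := by
  have hS := map_scaledGegenbauer_mul_gegenbauer_of_lt hL hlam h
  rw [scaledGegenbauer, sub_mul, map_sub, sub_eq_zero] at hS
  rw [mul_comm, hS, mul_comm]

theorem map_gegenbauer_mul_of_le : ∀ {m n : ℕ}, n ≤ m →
    L (gegenbauer (lam + 1) n * gegenbauer (lam + 1) m) =
      if Even (n + m) then L (gegenbauer (lam + 1) n ^ 2) else 0
  | 0, n, h => by
    obtain rfl := Nat.le_zero.1 h
    simp [sq]
  | 1, 0, _ => by
    simpa [scaledGegenbauer, gegenbauer] using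
      map_scaledGegenbauer_mul_gegenbauer_of_lt hL hlam one_pos
  | 1, 1, _ => by simp [sq]
  | m + 2, n, h => by
    rcases lt_trichotomy n (m + 1) with hn | rfl | hn
    · rw [map_gegenbauer_mul_add_two hL hlam (by omega), map_gegenbauer_mul_of_le (by omega)]
      exact if_congr (by grind) rfl rfl
    · rw [map_gegenbauer_mul_add_two hL hlam (by omega), mul_comm,
        map_gegenbauer_mul_of_le m.le_succ, if_neg (by grind), if_neg (by grind)]
    · obtain rfl : n = m + 2 := by omega
      rw [if_pos (Even.add_self _), sq]

theorem map_gegenbauer_mul (i j : ℕ) :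
    L (gegenbauer (lam + 1) i * gegenbauer (lam + 1) j) =
      if Even (i + j) then L (gegenbauer (lam + 1) (min i j) ^ 2) else 0 := by
  rcases le_total i j with h | h
  · rw [map_gegenbauer_mul_of_le hL hlam h, min_eq_left h]
  · rw [mul_comm, map_gegenbauer_mul_of_le hL hlam h, min_eq_right h, add_comm]

theorem map_scaledGegenbauer_add_two_sq (n : ℕ) :
    L (scaledGegenbauer lam (n + 2) ^ 2) =
      L (gegenbauer (lam + 1) (n + 2) ^ 2) - L (gegenbauer (lam + 1) n ^ 2) := by
  have horth := map_scaledGegenbauer_mul_gegenbauer_of_lt hL hlam (m := n + 2) (n := n) (by omega)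
  have hmul := map_gegenbauer_mul_add_two hL hlam (m := n) (n := n) (by omega)
  rw [scaledGegenbauer, sub_mul, map_sub] at horth
  rw [scaledGegenbauer, sq, sub_mul, mul_sub, mul_sub, map_sub, map_sub, map_sub, hmul, sq, sq]
  linear_combination -horth

end IsGegenbauerFunctional

end Functional

section Kernel

variable {lam : ℝ}

/-- The squared norm of `C_n^{(lam + 1)}` for the Gegenbauer weight with parameter `lam`, normalized
by the choice `Γ(2 * lam + 1) / 2` of the total mass of the weight. -/
noncomputable def gegenbauerNormSq (lam : ℝ) (n : ℕ) : ℝ :=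
  Real.Gamma (n + 2 * lam + 2) / (2 * (2 * lam + 1) * n.factorial)

theorem natCast_add_one_add_pos (hlam : -(1 / 2 : ℝ) < lam) (n : ℕ) : 0 < (n : ℝ) + 1 + lam := by
  linarith [(n.cast_nonneg : (0 : ℝ) ≤ n)]

theorem natCast_add_one_add_two_mul_ne_zero (hlam : -(1 / 2 : ℝ) < lam) (n : ℕ) :
    (n : ℝ) + 1 + 2 * lam ≠ 0 := by
  have : (0 : ℝ) ≤ n := n.cast_nonneg
  linarith

theorem gegenbauerNormSq_pos (hlam : -(1 / 2 : ℝ) < lam) (n : ℕ) : 0 < gegenbauerNormSq lam n := by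
  have : (0 : ℝ) ≤ n := n.cast_nonneg
  have : 0 < 2 * lam + 1 := by linarith
  have := Real.Gamma_pos_of_pos (s := n + 2 * lam + 2) (by linarith)
  unfold gegenbauerNormSq
  positivity

theorem gegenbauerNormSq_zero (hlam : -(1 / 2 : ℝ) < lam) :
    gegenbauerNormSq lam 0 = Real.Gamma (2 * lam + 1) / 2 := by
  have h : 2 * lam + 1 ≠ 0 := by linarith
  rw [gegenbauerNormSq, show ((0 : ℕ) : ℝ) + 2 * lam + 2 = 2 * lam + 1 + 1 by push_cast; ring,
    Real.Gamma_add_one h, Nat.factorial_zero]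
  push_cast
  field_simp

theorem gegenbauerNormSq_succ (hlam : -(1 / 2 : ℝ) < lam) (n : ℕ) :
    (n + 1) * gegenbauerNormSq lam (n + 1) = (n + 2 * lam + 2) * gegenbauerNormSq lam n := by
  have : (0 : ℝ) ≤ n := n.cast_nonneg
  have h : 2 * lam + 1 ≠ 0 := by linarith
  have hn' : (n : ℝ) + 1 ≠ 0 := n.cast_add_one_ne_zero
  rw [gegenbauerNormSq, gegenbauerNormSq, Nat.factorial_succ, Nat.cast_add_one,
    show (n : ℝ) + 1 + 2 * lam + 2 = n + 2 * lam + 2 + 1 by ring, Real.Gamma_add_one (by linarith)]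
  push_cast
  field_simp

theorem gegenbauerNormSq_one (hlam : -(1 / 2 : ℝ) < lam) :
    gegenbauerNormSq lam 1 = (1 + lam) ^ 2 * hsq lam 1 := by
  have : 1 + lam ≠ 0 := by linarith
  have hsucc := gegenbauerNormSq_succ hlam 0
  rw [gegenbauerNormSq_zero hlam] at hsucc
  rw [hsq, one_add_one_eq_two, Real.Gamma_two, mul_one, add_comm 1 (2 * lam)]
  generalize Real.Gamma (2 * lam + 1) = G at hsucc ⊢
  field_simp
  push_cast at hsucc
  linear_combination hsucc

theorem gegenbauerNormSq_add_two_sub (hlam : -(1 / 2 : ℝ) < lam) (n : ℕ) :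
    gegenbauerNormSq lam (n + 2) - gegenbauerNormSq lam n =
      (n + 2 + lam) ^ 2 * hsq lam (n + 2) := by
  have : (0 : ℝ) ≤ n := n.cast_nonneg
  have hsq_eq : (n + 2) * (n + 1) * (n + 2 + lam) * hsq lam (n + 2) =
      2 * (2 * lam + 1) * gegenbauerNormSq lam n := by
    have h : 2 * lam + 1 ≠ 0 := by linarith
    have h' : (n : ℝ) + 2 + lam ≠ 0 := by linarith
    have hΓ : Real.Gamma (n + 2 + 1) = (n + 2) * (n + 1) * n.factorial := by
      have := Real.Gamma_nat_eq_factorial (n + 2)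
      push_cast [Nat.factorial_succ] at this
      rw [this]
      ring
    rw [hsq, gegenbauerNormSq, hΓ, add_right_comm (n : ℝ) 2 (2 * lam)]
    field_simp
  have h1 := gegenbauerNormSq_succ hlam n
  have h2 := gegenbauerNormSq_succ hlam (n + 1)
  push_cast at h2
  have hne : ((n : ℝ) + 2) * (n + 1) ≠ 0 := by positivity
  apply mul_left_cancel₀ hne
  linear_combination (n + 1) * h2 + (n + 2 * lam + 3) * h1 - (n + 2 + lam) * hsq_eq

theorem hsq_pos {x : ℝ} (hlam : -(1 / 2 : ℝ) < lam) (hx : 1 ≤ x) : 0 < hsq lam x :=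
  div_pos (Real.Gamma_pos_of_pos (by linarith))
    (mul_pos (by linarith) (Real.Gamma_pos_of_pos (by linarith)))

theorem hsq_natCast_add_one_pos (hlam : -(1 / 2 : ℝ) < lam) (n : ℕ) : 0 < hsq lam (n + 1) :=
  hsq_pos hlam (by linarith [(n.cast_nonneg : (0 : ℝ) ≤ n)])

theorem sqrt_hsq_natCast_add_one_pos (hlam : -(1 / 2 : ℝ) < lam) (i : ℕ) :
    0 < √(hsq lam (i + 1)) :=
  Real.sqrt_pos.2 (hsq_natCast_add_one_pos hlam i)

theorem hsq_add_one {x : ℝ} (hlam : -(1 / 2 : ℝ) < lam) (hx : 1 ≤ x) :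
    hsq lam (x + 1) = (x + lam) / (x + 1 + lam) * ((x + 2 * lam) / (x + 1)) * hsq lam x := by
  have h0 : Real.Gamma (x + 1) ≠ 0 := (Real.Gamma_pos_of_pos (by linarith)).ne'
  have h1 : x + 1 ≠ 0 := by linarith
  have h2 : x + lam ≠ 0 := by linarith
  have h3 : x + 1 + lam ≠ 0 := by linarith
  rw [hsq, hsq, Real.Gamma_add_one h1, add_right_comm, Real.Gamma_add_one (by linarith)]
  field_simp

theorem hsq_add_one_le {x y : ℝ} (hlam : -(1 / 2 : ℝ) < lam) (hx : 1 ≤ x) (hxy : x ≤ y) :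
    hsq lam (y + 1) ≤ (x + 2 * lam + 1) / x * hsq lam y := by
  have hfst : (y + lam) / (y + 1 + lam) ≤ 1 := div_le_one_of_le₀ (by linarith) (by linarith)
  have hsnd : (y + 2 * lam) / (y + 1) ≤ (x + 2 * lam + 1) / x := by
    rw [div_le_div_iff₀ (by linarith) (by linarith)]
    nlinarith [mul_nonneg (by linarith : 0 ≤ 1 + 2 * lam) (by linarith : 0 ≤ y + 1 - x)]
  have hpos : 0 ≤ (y + 2 * lam) / (y + 1) := div_nonneg (by linarith) (by linarith)
  rw [hsq_add_one hlam (hx.trans hxy)]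
  exact mul_le_mul_of_nonneg_right ((mul_le_of_le_one_left hpos hfst).trans hsnd)
    (hsq_pos hlam (hx.trans hxy)).le

/-- The inner products of the derivatives of orthonormal Gegenbauer polynomials of degrees `i + 1`
and `j + 1` with `i` and `j` of equal parity. -/
noncomputable def derivKernel (lam : ℝ) (i j : ℕ) : ℝ :=
  4 * gegenbauerNormSq lam (min i j) / (√(hsq lam (i + 1)) * √(hsq lam (j + 1)))

theorem derivKernel_comm (i j : ℕ) : derivKernel lam i j = derivKernel lam j i := by
  rw [derivKernel, derivKernel, min_comm, mul_comm √_]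

theorem derivKernel_nonneg (hlam : -(1 / 2 : ℝ) < lam) (i j : ℕ) : 0 ≤ derivKernel lam i j := by
  have := gegenbauerNormSq_pos hlam (min i j)
  unfold derivKernel
  positivity

theorem sqrt_mul_sqrt_le_mul {a b c d ρ : ℝ} (hρ : 0 ≤ ρ) (hac : c ≤ ρ * a) (hbd : d ≤ ρ * b) :
    √c * √d ≤ ρ * (√a * √b) :=
  calc √c * √d ≤ √(ρ * a) * √(ρ * b) := by gcongr
    _ = √ρ * √ρ * (√a * √b) := by
      rw [Real.sqrt_mul hρ, Real.sqrt_mul hρ]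
      ring
    _ = ρ * (√a * √b) := by rw [Real.mul_self_sqrt hρ]

theorem derivKernel_le_succ_succ (hlam : -(1 / 2 : ℝ) < lam) (i j : ℕ) :
    derivKernel lam i j ≤ derivKernel lam (i + 1) (j + 1) := by
  wlog hij : i ≤ j generalizing i j
  · rw [derivKernel_comm i, derivKernel_comm (i + 1)]
    exact this j i (le_of_not_ge hij)
  have : (0 : ℝ) ≤ i := i.cast_nonneg
  have hij' : (i : ℝ) ≤ j := Nat.cast_le.2 hij
  set ρ : ℝ := (i + 1 + 2 * lam + 1) / (i + 1) with hρ
  have hρ0 : 0 ≤ ρ := div_nonneg (by linarith) (by linarith)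
  have hnorm : gegenbauerNormSq lam (i + 1) = ρ * gegenbauerNormSq lam i := by
    rw [hρ]
    field_simp
    linear_combination gegenbauerNormSq_succ hlam i
  have hsqrt := sqrt_mul_sqrt_le_mul hρ0
    (hsq_add_one_le hlam (by linarith : 1 ≤ (i : ℝ) + 1) le_rfl)
    (hsq_add_one_le hlam (by linarith) (by linarith : (i : ℝ) + 1 ≤ j + 1))
  have := gegenbauerNormSq_pos hlam i
  have := sqrt_hsq_natCast_add_one_pos hlam i
  have := sqrt_hsq_natCast_add_one_pos hlam j
  have hisucc := sqrt_hsq_natCast_add_one_pos hlam (i + 1)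
  have hjsucc := sqrt_hsq_natCast_add_one_pos hlam (j + 1)
  push_cast at hisucc hjsucc
  rw [derivKernel, derivKernel, min_eq_left hij, min_eq_left (Nat.succ_le_succ hij), hnorm]
  push_cast
  rw [div_le_div_iff₀ (by positivity) (by positivity)]
  calc 4 * gegenbauerNormSq lam i * (√(hsq lam (i + 1 + 1)) * √(hsq lam (j + 1 + 1)))
      ≤ 4 * gegenbauerNormSq lam i * (ρ * (√(hsq lam (i + 1)) * √(hsq lam (j + 1)))) := by
        gcongr
    _ = 4 * (ρ * gegenbauerNormSq lam i) * (√(hsq lam (i + 1)) * √(hsq lam (j + 1))) := by ring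

theorem sum_gegAlpha_sq (hlam : -(1 / 2 : ℝ) < lam) (k : ℕ) :
    ∑ i ∈ Finset.Icc 1 (k + 1), gegAlpha lam i ^ 2 = gegenbauerNormSq lam (2 * k + 1) := by
  have hsq_gegAlpha (i : ℕ) :
      gegAlpha lam (i + 1) ^ 2 = (2 * i + 1 + lam) ^ 2 * hsq lam (2 * i + 1) := by
    have := hsq_natCast_add_one_pos hlam (2 * i)
    rw [gegAlpha, mul_pow]
    push_cast at this ⊢
    rw [show 2 * ((i : ℝ) + 1) - 1 = 2 * i + 1 by ring, Real.sq_sqrt this.le]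
  induction k with
  | zero => simpa [gegenbauerNormSq_one hlam] using hsq_gegAlpha 0
  | succ k ih =>
    have h := gegenbauerNormSq_add_two_sub hlam (2 * k + 1)
    rw [Finset.sum_Icc_succ_top (by omega), ih, hsq_gegAlpha, mul_add_one]
    push_cast at h ⊢
    ring_nf at h ⊢
    linear_combination -h

theorem sum_gegAlphaTildeSq (hlam : -(1 / 2 : ℝ) < lam) (k : ℕ) :
    ∑ i ∈ Finset.Icc 1 (k + 1), gegAlphaTildeSq lam i = gegenbauerNormSq lam (2 * k) := by
  induction k with
  | zero => simp [gegAlphaTildeSq, gegenbauerNormSq_zero hlam]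
  | succ k ih =>
    have h := gegenbauerNormSq_add_two_sub hlam (2 * k)
    rw [Finset.sum_Icc_succ_top (by omega), ih, gegAlphaTildeSq, if_neg (by omega), mul_add_one]
    push_cast at h ⊢
    ring_nf at h ⊢
    linear_combination -h

theorem Bmat_apply (hlam : -(1 / 2 : ℝ) < lam) (n : ℕ) (k l : Fin ((n + 1) / 2)) :
    Bmat lam n k l = derivKernel lam (2 * k + (n + 1) % 2) (2 * l + (n + 1) % 2) := by
  rw [derivKernel, min_add_add_right, Nat.mul_min_mul_left]
  rcases n.mod_two_eq_zero_or_one with hn | hn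
  · rw [Bmat, if_pos hn, Matrix.smul_apply, smul_eq_mul, Amat, min_add_add_right,
      sum_gegAlpha_sq hlam, gegBeta, gegBeta, show (n + 1) % 2 = 1 by omega]
    push_cast
    ring_nf
  · rw [Bmat, if_neg (by omega), Matrix.smul_apply, smul_eq_mul, AmatTilde, min_add_add_right,
      sum_gegAlphaTildeSq hlam, gegBetaTilde, gegBetaTilde, show (n + 1) % 2 = 0 by omega]
    push_cast
    ring_nf

/-- The Gram matrix of the derivatives of the orthonormal Gegenbauer polynomials of degrees
`1, …, n`, indexed by the degree minus one. -/
noncomputable def derivGram (lam : ℝ) (n : ℕ) : Matrix (Fin n) (Fin n) ℝ :=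
  .of fun i j => if Even (i + j : ℕ) then derivKernel lam i j else 0

theorem Bmat_eq_submatrix_derivGram (hlam : -(1 / 2 : ℝ) < lam) (n : ℕ) :
    ∃ g : Fin ((n + 1) / 2) ↪ Fin n, Bmat lam n = (derivGram lam n).submatrix g g := by
  refine ⟨⟨fun k => ⟨2 * k + (n + 1) % 2, by omega⟩, fun k l h => ?_⟩, ?_⟩
  · rw [Fin.mk.injEq] at h
    omega
  · ext k l
    rw [Bmat_apply hlam, submatrix_apply, derivGram, of_apply, if_pos]
    · rfl
    · change Even (2 * (k : ℕ) + (n + 1) % 2 + (2 * l + (n + 1) % 2))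
      grind

theorem abs_derivGram_le_Bmat (hlam : -(1 / 2 : ℝ) < lam) {n : ℕ} {i j : Fin n}
    {k l : Fin ((n + 1) / 2)} (hk : (k : ℕ) = (i + n % 2) / 2) (hl : (l : ℕ) = (j + n % 2) / 2)
    (hij : Even (i + j : ℕ)) : |derivGram lam n i j| ≤ Bmat lam n k l := by
  rw [derivGram, of_apply, if_pos hij, abs_of_nonneg (derivKernel_nonneg hlam i j),
    Bmat_apply hlam, hk, hl]
  rw [Nat.even_iff] at hij
  by_cases hi : 2 * ((i + n % 2) / 2) + (n + 1) % 2 = i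
  · rw [hi, show 2 * ((j + n % 2) / 2) + (n + 1) % 2 = j by omega]
  · rw [show 2 * ((i + n % 2) / 2) + (n + 1) % 2 = i + 1 by omega,
      show 2 * ((j + n % 2) / 2) + (n + 1) % 2 = j + 1 by omega]
    exact derivKernel_le_succ_succ hlam i j

theorem isGreatest_rayleighValues_derivGram (hlam : -(1 / 2 : ℝ) < lam) {n : ℕ} {μ : ℝ}
    (hμ : IsGreatest (rayleighValues (Bmat lam n)) μ) :
    IsGreatest (rayleighValues (derivGram lam n)) μ := by
  constructor
  · obtain ⟨g, hg⟩ := Bmat_eq_submatrix_derivGram hlam n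
    exact rayleighValues_submatrix_subset g (hg ▸ hμ.1)
  · refine mem_upperBounds_rayleighValues_of_blocks (fun i => decide (Even (i : ℕ)))
      (fun i j hij => ?_) fun a => ?_
    · rw [derivGram, of_apply, if_neg (by simpa [Nat.even_add] using hij)]
    · let fold : {i : Fin n // decide (Even (i : ℕ)) = a} ↪ Fin ((n + 1) / 2) :=
        ⟨fun i => ⟨(i + n % 2) / 2, by omega⟩, fun i j h => by
          have hpar := decide_eq_decide.1 (i.2.trans j.2.symm)
          rw [Fin.mk.injEq] at h
          rw [Nat.even_iff, Nat.even_iff] at hpar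
          exact Subtype.ext (Fin.ext (by omega))⟩
      refine mem_upperBounds_rayleighValues_of_abs_le fold (fun i j => ?_) hμ.2
      exact abs_derivGram_le_Bmat hlam rfl rfl
        (Nat.even_add.2 (decide_eq_decide.1 (i.2.trans j.2.symm)))

end Kernel

section Expansion

variable {lam : ℝ} {L : ℝ[X] →ₗ[ℝ] ℝ} {n : ℕ}

theorem map_sum_smul_mul_sum_smul {R A ι : Type*} [CommSemiring R] [Semiring A] [Algebra R A]
    [Fintype ι] (L : A →ₗ[R] R) (b : ι → A) (u : ι → R) :
    L ((∑ i, u i • b i) * ∑ i, u i • b i) = u ⬝ᵥ (.of fun i j => L (b i * b j)) *ᵥ u := by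
  rw [Finset.sum_mul_sum]
  simp only [smul_mul_smul_comm, map_sum, map_smul, smul_eq_mul, dotProduct, mulVec, of_apply,
    Finset.mul_sum]
  exact Finset.sum_congr rfl fun i _ => Finset.sum_congr rfl fun j _ => by ring

/-- The factor by which a functional `L` satisfying the Pearson equation exceeds the one of total
mass `Γ(2 * lam + 1) / 2` used in `gegenbauerNormSq`. -/
noncomputable def gegenbauerScale (lam : ℝ) (L : ℝ[X] →ₗ[ℝ] ℝ) : ℝ :=
  2 * L 1 / Real.Gamma (2 * lam + 1)

/-- The polynomial `scaledGegenbauer lam (i + 1)` divided by its norm, up to the common factor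
`gegenbauerScale`. The constant polynomial is left out. -/
noncomputable def normalizedGegenbauer (lam : ℝ) (i : ℕ) : ℝ[X] :=
  ((i + 1 + lam) * √(hsq lam (i + 1)))⁻¹ • scaledGegenbauer lam (i + 1)

theorem derivative_normalizedGegenbauer (hlam : -(1 / 2 : ℝ) < lam) (i : ℕ) :
    derivative (normalizedGegenbauer lam i) =
      (2 / √(hsq lam (i + 1))) • gegenbauer (lam + 1) i := by
  have hi := (natCast_add_one_add_pos hlam i).ne'
  have hC : 2 * ((i : ℝ[X]) + 1 + C lam) = C (2 * (i + 1 + lam)) := by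
    simp only [map_mul, map_add, map_ofNat, map_natCast, map_one]
  rw [normalizedGegenbauer, derivative_smul, derivative_scaledGegenbauer_succ, hC, ← smul_eq_C_mul,
    smul_smul]
  congr 1
  field_simp

theorem natDegree_normalizedGegenbauer_le (hlam : -(1 / 2 : ℝ) < lam) (i : ℕ) :
    (normalizedGegenbauer lam i).natDegree ≤ i + 1 :=
  (natDegree_smul_le _ _).trans (natDegree_eq_of_degree_eq_some
    (degree_scaledGegenbauer (fun n => by linarith [natCast_add_one_add_pos hlam n]) (i + 1))).le

theorem exists_eq_C_add_sum_normalizedGegenbauer (hlam : -(1 / 2 : ℝ) < lam) {p : ℝ[X]}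
    (hp : p.natDegree ≤ n) :
    ∃ (a : ℝ) (u : Fin n → ℝ), p = C a + ∑ i, u i • normalizedGegenbauer lam i := by
  have hdeg := degree_scaledGegenbauer (lam := lam) fun n => by
    linarith [natCast_add_one_add_pos hlam n]
  let S : Polynomial.Sequence ℝ := ⟨scaledGegenbauer lam, hdeg⟩
  have hS : S '' Set.Iic n ⊆
      insert 1 (Set.range fun i : Fin n => scaledGegenbauer lam (i + 1)) := by
    rintro _ ⟨_ | i, hi, rfl⟩
    · exact .inl rfl
    · exact .inr ⟨⟨i, hi⟩, rfl⟩
  have hpS : p ∈ Submodule.span ℝ (S '' Set.Iic n) := by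
    rw [S.span_degreeLE fun i _ => (leadingCoeff_ne_zero.2 (S.ne_zero i)).isUnit, mem_degreeLE]
    exact natDegree_le_iff_degree_le.1 hp
  obtain ⟨a, z, hz, rfl⟩ := Submodule.mem_span_insert.1 (Submodule.span_mono hS hpS)
  obtain ⟨c, rfl⟩ := (Submodule.mem_span_range_iff_exists_fun ℝ).1 hz
  refine ⟨a, fun i => c i * ((i + 1 + lam) * √(hsq lam (i + 1))), ?_⟩
  rw [smul_eq_C_mul, mul_one]
  congr! 2 with i
  have hi := natCast_add_one_add_pos hlam i
  have hi' := sqrt_hsq_natCast_add_one_pos hlam i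
  rw [normalizedGegenbauer, smul_smul, mul_inv_cancel_right₀ (by positivity)]

namespace IsGegenbauerFunctional

variable (hL : IsGegenbauerFunctional lam L) (hlam : -(1 / 2 : ℝ) < lam)

include hL hlam

theorem map_gegenbauer_sq (n : ℕ) :
    L (gegenbauer (lam + 1) n ^ 2) = gegenbauerScale lam L * gegenbauerNormSq lam n := by
  induction n with
  | zero =>
    have := (Real.Gamma_pos_of_pos (by linarith : 0 < 2 * lam + 1)).ne'
    rw [gegenbauer, one_pow, gegenbauerScale, gegenbauerNormSq_zero hlam]
    field_simp
  | succ n ih =>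
    have hn : (n : ℝ) + 1 ≠ 0 := n.cast_add_one_ne_zero
    apply mul_left_cancel₀ hn
    rw [hL.map_gegenbauer_succ_sq, ih, mul_left_comm, ← gegenbauerNormSq_succ hlam, mul_left_comm]

theorem map_scaledGegenbauer_succ_sq (n : ℕ) :
    L (scaledGegenbauer lam (n + 1) ^ 2) =
      gegenbauerScale lam L * ((n + 1 + lam) ^ 2 * hsq lam (n + 1)) := by
  cases n with
  | zero =>
    rw [scaledGegenbauer, hL.map_gegenbauer_sq hlam, gegenbauerNormSq_one hlam, Nat.cast_zero,
      zero_add]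
  | succ n =>
    rw [hL.map_scaledGegenbauer_add_two_sq (natCast_add_one_add_two_mul_ne_zero hlam),
      hL.map_gegenbauer_sq hlam, hL.map_gegenbauer_sq hlam, ← mul_sub,
      gegenbauerNormSq_add_two_sub hlam, Nat.cast_add_one, add_assoc (n : ℝ) 1 1,
      one_add_one_eq_two]

theorem map_normalizedGegenbauer (i : ℕ) : L (normalizedGegenbauer lam i) = 0 := by
  rw [normalizedGegenbauer, map_smul,
    hL.map_scaledGegenbauer_succ (natCast_add_one_add_two_mul_ne_zero hlam), smul_zero]

theorem map_normalizedGegenbauer_mul (i j : ℕ) :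
    L (normalizedGegenbauer lam i * normalizedGegenbauer lam j) =
      if i = j then gegenbauerScale lam L else 0 := by
  rw [normalizedGegenbauer, normalizedGegenbauer, smul_mul_smul_comm, map_smul, smul_eq_mul]
  split_ifs with hij
  · subst hij
    have hi := natCast_add_one_add_pos hlam i
    have hi' := hsq_natCast_add_one_pos hlam i
    rw [← sq, ← sq, inv_pow, mul_pow, Real.sq_sqrt hi'.le, hL.map_scaledGegenbauer_succ_sq hlam,
      mul_comm, mul_inv_cancel_right₀ (by positivity)]
  · rw [hL.map_scaledGegenbauer_succ_mul_succ (natCast_add_one_add_two_mul_ne_zero hlam) hij,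
      mul_zero]

theorem map_derivative_normalizedGegenbauer_mul (i j : ℕ) :
    L (derivative (normalizedGegenbauer lam i) * derivative (normalizedGegenbauer lam j)) =
      gegenbauerScale lam L * if Even (i + j) then derivKernel lam i j else 0 := by
  rw [derivative_normalizedGegenbauer hlam, derivative_normalizedGegenbauer hlam,
    smul_mul_smul_comm, map_smul, smul_eq_mul,
    hL.map_gegenbauer_mul (natCast_add_one_add_two_mul_ne_zero hlam), hL.map_gegenbauer_sq hlam,
    div_mul_div_comm, mul_ite, mul_ite, mul_zero, mul_zero, derivKernel]
  exact if_congr Iff.rfl (by ring) rfl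

theorem map_C_add_sum_mul_self (a : ℝ) (u : Fin n → ℝ) :
    L ((C a + ∑ i, u i • normalizedGegenbauer lam i) *
        (C a + ∑ i, u i • normalizedGegenbauer lam i)) =
      a ^ 2 * L 1 + gegenbauerScale lam L * (u ⬝ᵥ u) := by
  have hsum : L (∑ i, u i • normalizedGegenbauer lam i) = 0 := by
    simp only [map_sum, map_smul, hL.map_normalizedGegenbauer hlam, smul_zero,
      Finset.sum_const_zero]
  have hgram : (Matrix.of fun i j : Fin n =>
      L (normalizedGegenbauer lam i * normalizedGegenbauer lam j)) =
        gegenbauerScale lam L • 1 := by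
    ext i j
    simp only [of_apply, hL.map_normalizedGegenbauer_mul hlam, Matrix.smul_apply, one_apply,
      Fin.val_inj, smul_eq_mul, mul_ite, mul_one, mul_zero]
  have hsq (q : ℝ[X]) : L ((C a + q) * (C a + q)) = a ^ 2 * L 1 + 2 * a * L q + L (q * q) := by
    rw [← map_C_mul_eq_mul_map, ← map_C_mul_eq_mul_map, ← map_add, ← map_add]
    congr 1
    simp only [map_mul, map_pow, map_ofNat]
    ring
  rw [hsq, hsum, map_sum_smul_mul_sum_smul, hgram, smul_mulVec, one_mulVec, dotProduct_smul,
    smul_eq_mul, mul_zero, add_zero]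

theorem map_derivative_C_add_sum_mul_self (a : ℝ) (u : Fin n → ℝ) :
    L (derivative (C a + ∑ i, u i • normalizedGegenbauer lam i) *
        derivative (C a + ∑ i, u i • normalizedGegenbauer lam i)) =
      gegenbauerScale lam L * (u ⬝ᵥ derivGram lam n *ᵥ u) := by
  have hgram : (Matrix.of fun i j : Fin n =>
      L (derivative (normalizedGegenbauer lam i) * derivative (normalizedGegenbauer lam j))) =
        gegenbauerScale lam L • derivGram lam n := by
    ext i j
    exact hL.map_derivative_normalizedGegenbauer_mul hlam i j
  simp only [derivative_add, derivative_C, zero_add, derivative_sum, derivative_smul]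
  rw [map_sum_smul_mul_sum_smul, hgram, smul_mulVec, dotProduct_smul, smul_eq_mul]

end IsGegenbauerFunctional

end Expansion

section Weight

theorem intervalIntegrable_one_sub_sq_rpow {s : ℝ} (hs : -1 < s) :
    IntervalIntegrable (fun x : ℝ => (1 - x ^ 2) ^ s) MeasureTheory.volume (-1) 1 := by
  have hright : IntervalIntegrable (fun x : ℝ => (1 - x ^ 2) ^ s) MeasureTheory.volume 0 1 := by
    have hsub : IntervalIntegrable (fun x : ℝ => (1 - x) ^ s) MeasureTheory.volume 0 1 := by
      simpa using
        ((intervalIntegral.intervalIntegrable_rpow' (a := 0) (b := 1) hs).comp_sub_left 1).symm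
    have hadd : ContinuousOn (fun x : ℝ => (1 + x) ^ s) (Set.uIcc 0 1) := by
      rw [Set.uIcc_of_le zero_le_one]
      exact (by fun_prop : Continuous fun x : ℝ => 1 + x).continuousOn.rpow_const
        fun x hx => .inl (by linarith [hx.1])
    refine (hsub.mul_continuousOn hadd).congr fun x hx => ?_
    rw [Set.uIoc_of_le zero_le_one] at hx
    rw [← Real.mul_rpow (by linarith [hx.2]) (by linarith [hx.1])]
    congr 1
    ring
  have hleft : IntervalIntegrable (fun x : ℝ => (1 - x ^ 2) ^ s) MeasureTheory.volume (-1) 0 := by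
    simpa using (hright.comp_sub_left 0).symm
  exact hleft.trans hright

theorem intervalIntegrable_eval_mul_one_sub_sq_rpow {s : ℝ} (hs : -1 < s) (p : ℝ[X]) :
    IntervalIntegrable (fun x : ℝ => p.eval x * (1 - x ^ 2) ^ s) MeasureTheory.volume (-1) 1 :=
  (intervalIntegrable_one_sub_sq_rpow hs).continuousOn_mul p.continuous.continuousOn

variable {lam : ℝ} (hlam : -(1 / 2 : ℝ) < lam)

/-- Integration of polynomials against the Gegenbauer weight, as a linear functional: the functional
for which the Pearson equation encodes integration by parts. -/
noncomputable def gegFunctional : ℝ[X] →ₗ[ℝ] ℝ where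
  toFun p := ∫ x in (-1 : ℝ)..1, p.eval x * (1 - x ^ 2) ^ (lam - 1 / 2)
  map_add' p q := by
    simp only [eval_add, add_mul]
    exact intervalIntegral.integral_add
      (intervalIntegrable_eval_mul_one_sub_sq_rpow (by linarith) p)
      (intervalIntegrable_eval_mul_one_sub_sq_rpow (by linarith) q)
  map_smul' a p := by
    simp only [eval_smul, smul_eq_mul, mul_assoc, RingHom.id_apply]
    exact intervalIntegral.integral_const_mul _ _

theorem gegNorm_eval (p : ℝ[X]) :
    gegNorm lam (fun x => p.eval x) = √(gegFunctional hlam (p * p)) := by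
  simp only [gegNorm, Real.sqrt_eq_rpow, gegFunctional, LinearMap.coe_mk, AddHom.coe_mk, eval_mul,
    sq (eval _ p)]

theorem gegFunctional_mul_self_nonneg (p : ℝ[X]) : 0 ≤ gegFunctional hlam (p * p) := by
  refine intervalIntegral.integral_nonneg (by norm_num) fun x hx => ?_
  rw [eval_mul]
  exact mul_nonneg (mul_self_nonneg _) (Real.rpow_nonneg (by nlinarith [hx.1, hx.2]) _)

theorem gegFunctional_one_pos : 0 < gegFunctional hlam 1 := by
  refine intervalIntegral.intervalIntegral_pos_of_pos_on
    (intervalIntegrable_eval_mul_one_sub_sq_rpow (by linarith) 1) (fun x hx => ?_) (by norm_num)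
  rw [eval_one, one_mul]
  exact Real.rpow_pos_of_pos (by nlinarith [hx.1, hx.2]) _

theorem gegenbauerScale_gegFunctional_pos : 0 < gegenbauerScale lam (gegFunctional hlam) :=
  div_pos (mul_pos two_pos (gegFunctional_one_pos hlam)) (Real.Gamma_pos_of_pos (by linarith))

theorem hasDerivAt_eval_mul_one_sub_sq_rpow (s : ℝ) (q : ℝ[X]) {x : ℝ} (hx : x ∈ Set.Ioo (-1) 1) :
    HasDerivAt (fun x : ℝ => q.eval x * (1 - x ^ 2) ^ (s + 1))
      (((1 - X ^ 2) * derivative q - C (2 * (s + 1)) * (X * q)).eval x * (1 - x ^ 2) ^ s) x := by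
  have hpos : 0 < 1 - x ^ 2 := by nlinarith [hx.1, hx.2]
  have hbase : HasDerivAt (fun x : ℝ => 1 - x ^ 2) (-(2 * x)) x := by
    simpa using ((hasDerivAt_id x).pow 2).const_sub 1
  refine ((q.hasDerivAt x).mul (hbase.rpow_const (.inl hpos.ne'))).congr_deriv ?_
  rw [Real.rpow_add_one hpos.ne', add_sub_cancel_right]
  simp only [eval_sub, eval_mul, eval_one, eval_pow, eval_X, eval_C]
  ring

theorem isGegenbauerFunctional_gegFunctional :
    IsGegenbauerFunctional lam (gegFunctional hlam) := by
  intro q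
  have hs : 0 < lam - 1 / 2 + 1 := by linarith
  have hFTC := intervalIntegral.integral_eq_sub_of_hasDerivAt_of_le (by norm_num : (-1 : ℝ) ≤ 1)
    (q.continuous.mul ((by fun_prop : Continuous fun x : ℝ => 1 - x ^ 2).rpow_const
      fun _ => .inr hs.le)).continuousOn
    (fun x hx => hasDerivAt_eval_mul_one_sub_sq_rpow (lam - 1 / 2) q hx)
    (intervalIntegrable_eval_mul_one_sub_sq_rpow (by linarith) _)
  have hzero : gegFunctional hlam
      ((1 - X ^ 2) * derivative q - C (2 * (lam - 1 / 2 + 1)) * (X * q)) = 0 := by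
    refine hFTC.trans ?_
    norm_num [Real.zero_rpow hs.ne']
  rw [map_sub, map_C_mul_eq_mul_map] at hzero
  linear_combination hzero

end Weight

section Markov

variable {lam μ : ℝ} (hlam : -(1 / 2 : ℝ) < lam) {n : ℕ}

include hlam

theorem gegFunctional_derivative_mul_self_le
    (hμ : μ ∈ upperBounds (rayleighValues (derivGram lam n))) (hμ0 : 0 ≤ μ) {p : ℝ[X]}
    (hp : p.natDegree ≤ n) :
    gegFunctional hlam (derivative p * derivative p) ≤ μ * gegFunctional hlam (p * p) := by
  have hL := isGegenbauerFunctional_gegFunctional hlam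
  have hone := gegFunctional_one_pos hlam
  have hscale := gegenbauerScale_gegFunctional_pos hlam
  obtain ⟨a, u, rfl⟩ := exists_eq_C_add_sum_normalizedGegenbauer hlam hp
  rw [hL.map_C_add_sum_mul_self hlam, hL.map_derivative_C_add_sum_mul_self hlam, mul_add,
    mul_left_comm μ (gegenbauerScale _ _)]
  calc _ ≤ gegenbauerScale lam (gegFunctional hlam) * (μ * (u ⬝ᵥ u)) := by
        gcongr
        exact mem_upperBounds_rayleighValues.1 hμ u
    _ ≤ _ := le_add_of_nonneg_left (by positivity)

theorem exists_gegFunctional_derivative_mul_self_eq (hμ : μ ∈ rayleighValues (derivGram lam n)) :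
    ∃ p : ℝ[X], p.natDegree ≤ n ∧ 0 < gegFunctional hlam (p * p) ∧
      gegFunctional hlam (derivative p * derivative p) = μ * gegFunctional hlam (p * p) := by
  obtain ⟨u, hu, hquot⟩ := hμ
  have hL := isGegenbauerFunctional_gegFunctional hlam
  refine ⟨C 0 + ∑ i, u i • normalizedGegenbauer lam i, ?_, ?_, ?_⟩
  · rw [C_0, zero_add]
    exact natDegree_sum_le_of_forall_le _ _ fun i _ => (natDegree_smul_le _ _).trans
      ((natDegree_normalizedGegenbauer_le hlam i).trans i.isLt)
  · rw [hL.map_C_add_sum_mul_self hlam, zero_pow two_ne_zero, zero_mul, zero_add]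
    exact mul_pos (gegenbauerScale_gegFunctional_pos hlam) (dotProduct_self_pos hu)
  · rw [hL.map_C_add_sum_mul_self hlam, hL.map_derivative_C_add_sum_mul_self hlam, hquot]
    ring

theorem nonneg_of_mem_rayleighValues_derivGram (hμ : μ ∈ rayleighValues (derivGram lam n)) :
    0 ≤ μ := by
  obtain ⟨p, -, hpos, heq⟩ := exists_gegFunctional_derivative_mul_self_eq hlam hμ
  exact nonneg_of_mul_nonneg_left (heq ▸ gegFunctional_mul_self_nonneg hlam _) hpos

theorem markovConst_sq_eq_of_isGreatest_rayleighValues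
    (hμ : IsGreatest (rayleighValues (derivGram lam n)) μ) : markovConst lam n ^ 2 = μ := by
  have hμ0 := nonneg_of_mem_rayleighValues_derivGram hlam hμ.1
  suffices markovConst lam n = √μ by rw [this, Real.sq_sqrt hμ0]
  refine IsGreatest.csSup_eq ⟨?_, ?_⟩
  · obtain ⟨p, hp, hpos, heq⟩ := exists_gegFunctional_derivative_mul_self_eq hlam hμ.1
    have hp0 : p ≠ 0 := by
      rintro rfl
      simp at hpos
    refine ⟨p, hp0, hp, ?_⟩
    rw [gegNorm_eval hlam, gegNorm_eval hlam, heq, Real.sqrt_mul hμ0,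
      mul_div_cancel_right₀ _ (Real.sqrt_pos.2 hpos).ne']
  · rintro _ ⟨p, -, hp, rfl⟩
    rw [gegNorm_eval hlam, gegNorm_eval hlam]
    refine div_le_of_le_mul₀ (Real.sqrt_nonneg _) (Real.sqrt_nonneg _) ?_
    rw [← Real.sqrt_mul hμ0]
    exact Real.sqrt_le_sqrt (gegFunctional_derivative_mul_self_le hlam hμ.2 hμ0 hp)

theorem isHermitian_Bmat : (Bmat lam n).IsHermitian := by
  ext k l
  rw [conjTranspose_apply, star_trivial, Bmat_apply hlam, Bmat_apply hlam, derivKernel_comm]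

end Markov

theorem markov_constant_eq_max_eigenvalue (lam : ℝ) (hlam : -(1/2 : ℝ) < lam)
    (n : ℕ) (hn : 1 ≤ n) :
    (markovConst lam n)^2 =
      sSup {mu : ℝ | ∃ v : Fin ((n+1)/2) → ℝ, v ≠ 0 ∧ (Bmat lam n).mulVec v = mu • v} := by
  have : Nonempty (Fin ((n + 1) / 2)) := ⟨⟨0, by omega⟩⟩
  obtain ⟨μ, hrayleigh, heigen⟩ := exists_isGreatest_rayleighValues (isHermitian_Bmat (n := n) hlam)
  rw [heigen.csSup_eq]
  exact markovConst_sq_eq_of_isGreatest_rayleighValues hlam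
    (isGreatest_rayleighValues_derivGram hlam hrayleigh)
end

section
/- Let λ > -1/2 and define F_1(x) = x^{2λ}(x + λ/2)²(x + λ)² and F_2(x) = x²(x + λ/2)²(x + λ)^{2λ} for x > 0 (real powers). Then F_1 and F_2 are convex on [1/2, ∞) and monotonically increasing on [1, ∞). -/
/-!
A product `f = ∏ i, (x + a i) ^ r i` of powers of positive linear forms satisfies `f' = f g` and
`f'' = f (g² + g')`, where `g = ∑ i, r i / (x + a i)` is its logarithmic derivative. So `f` is
increasing where `0 ≤ g`, and convex where `∑ i, r i / (x + a i)² ≤ g²`. For the exponents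
`2 λ, 2, 2` and the reciprocals `p, q, r` of the linear forms, the second condition reads
`λ p² + q² + r² ≤ 2 (λ p + q + r)²`. When `-1/2 ≤ λ ≤ 0` this holds unconditionally, by completing
the square; when `0 ≤ λ` it suffices that `(1 - 2 λ) p ≤ 4 (q + r)`.
-/

open Set

section ProdAddRpow

variable {ι : Type*} {t : Finset ι} {a r : ι → ℝ} {x : ℝ} {D : Set ℝ}

lemma hasDerivAt_prod_add_rpow (hx : ∀ i ∈ t, 0 < x + a i) :
    HasDerivAt (fun y ↦ ∏ i ∈ t, (y + a i) ^ r i)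
      ((∏ i ∈ t, (x + a i) ^ r i) * ∑ i ∈ t, r i / (x + a i)) x := by
  classical
  have hfactor : ∀ i ∈ t, HasDerivAt (fun y ↦ (y + a i) ^ r i)
      ((x + a i) ^ r i * (r i / (x + a i))) x := fun i hi ↦ by
    refine (((hasDerivAt_id x).add_const (a i)).rpow_const (Or.inl (hx i hi).ne')).congr_deriv ?_
    rw [id_eq, Real.rpow_sub_one (hx i hi).ne']
    ring
  refine (HasDerivAt.fun_finsetProd hfactor).congr_deriv ?_
  rw [Finset.mul_sum]
  refine Finset.sum_congr rfl fun i hi ↦ ?_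
  rw [smul_eq_mul, ← mul_assoc, Finset.prod_erase_mul _ _ hi]

lemma hasDerivAt_sum_div_add (hx : ∀ i ∈ t, x + a i ≠ 0) :
    HasDerivAt (fun y ↦ ∑ i ∈ t, r i / (y + a i)) (-∑ i ∈ t, r i / (x + a i) ^ 2) x := by
  rw [← Finset.sum_neg_distrib]
  refine HasDerivAt.fun_sum fun i hi ↦ ?_
  refine ((hasDerivAt_const x (r i)).fun_div
    ((hasDerivAt_id x).add_const (a i)) (hx i hi)).congr_deriv ?_
  simp [neg_div]

theorem monotoneOn_prod_add_rpow (hD : Convex ℝ D) (hpos : ∀ x ∈ D, ∀ i ∈ t, 0 < x + a i)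
    (h : ∀ x ∈ interior D, 0 ≤ ∑ i ∈ t, r i / (x + a i)) :
    MonotoneOn (fun x ↦ ∏ i ∈ t, (x + a i) ^ r i) D := by
  have hderiv := fun x hx ↦ hasDerivAt_prod_add_rpow (r := r) (hpos x hx)
  refine monotoneOn_of_hasDerivWithinAt_nonneg hD
    (fun x hx ↦ (hderiv x hx).continuousAt.continuousWithinAt)
    (fun x hx ↦ (hderiv x (interior_subset hx)).hasDerivWithinAt) fun x hx ↦ ?_
  have hprod : 0 ≤ ∏ i ∈ t, (x + a i) ^ r i :=
    Finset.prod_nonneg fun i hi ↦ Real.rpow_nonneg (hpos x (interior_subset hx) i hi).le _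
  exact mul_nonneg hprod (h x hx)

theorem convexOn_prod_add_rpow (hD : Convex ℝ D) (hpos : ∀ x ∈ D, ∀ i ∈ t, 0 < x + a i)
    (h : ∀ x ∈ interior D,
      ∑ i ∈ t, r i / (x + a i) ^ 2 ≤ (∑ i ∈ t, r i / (x + a i)) ^ 2) :
    ConvexOn ℝ D (fun x ↦ ∏ i ∈ t, (x + a i) ^ r i) := by
  have hderiv := fun x hx ↦ hasDerivAt_prod_add_rpow (r := r) (hpos x hx)
  have hderiv2 := fun x hx ↦ (hderiv x hx).fun_mul
    (hasDerivAt_sum_div_add (r := r) fun i hi ↦ (hpos x hx i hi).ne')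
  refine convexOn_of_hasDerivWithinAt2_nonneg hD
    (fun x hx ↦ (hderiv x hx).continuousAt.continuousWithinAt)
    (fun x hx ↦ (hderiv x (interior_subset hx)).hasDerivWithinAt)
    (fun x hx ↦ (hderiv2 x (interior_subset hx)).hasDerivWithinAt) fun x hx ↦ ?_
  have hprod : 0 ≤ ∏ i ∈ t, (x + a i) ^ r i :=
    Finset.prod_nonneg fun i hi ↦ Real.rpow_nonneg (hpos x (interior_subset hx) i hi).le _
  linear_combination mul_nonneg hprod (sub_nonneg.2 (h x hx))

end ProdAddRpow

section RpowMulSqMulSq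

variable {lam a b c : ℝ} {D : Set ℝ}

lemma mul_sq_add_sq_add_sq_le_two_mul_sq {p q r : ℝ} (hlam : -(1 / 2) ≤ lam) (hp : 0 ≤ p)
    (hq : 0 ≤ q) (hr : 0 ≤ r) (h : 0 ≤ lam → (1 - 2 * lam) * p ≤ 4 * (q + r)) :
    lam * p ^ 2 + q ^ 2 + r ^ 2 ≤ 2 * (lam * p + q + r) ^ 2 := by
  have hqr : 0 ≤ q * r := mul_nonneg hq hr
  rcases le_total lam 0 with hneg | hnonneg
  · have hcoeff : 0 ≤ -lam * (1 + 2 * lam) := mul_nonneg (by linarith) (by linarith)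
    linear_combination sq_nonneg (q + r + 2 * lam * p) + mul_nonneg hcoeff (sq_nonneg p) + 2 * hqr
  · have hcross := mul_nonneg (mul_nonneg hnonneg hp) (sub_nonneg.2 (h hnonneg))
    linear_combination hcross + sq_nonneg (q + r) + 2 * hqr

theorem monotoneOn_add_rpow_mul_sq_mul_sq (hD : Convex ℝ D)
    (hpos : ∀ x ∈ D, 0 < x + a ∧ 0 < x + b ∧ 0 < x + c)
    (h : ∀ x ∈ interior D, 0 ≤ lam / (x + a) + 1 / (x + b) + 1 / (x + c)) :
    MonotoneOn (fun x ↦ (x + a) ^ (2 * lam) * (x + b) ^ 2 * (x + c) ^ 2) D := by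
  have hmono : MonotoneOn (fun x ↦ ∏ i, (x + ![a, b, c] i) ^ ![2 * lam, 2, 2] i) D := by
    refine monotoneOn_prod_add_rpow hD
      (fun x hx ↦ by simpa [Fin.forall_fin_succ] using hpos x hx) fun x hx ↦ ?_
    simp only [Fin.sum_univ_three, Matrix.cons_val]
    linear_combination 2 * h x hx
  simpa [Fin.prod_univ_three] using hmono

theorem convexOn_add_rpow_mul_sq_mul_sq (hlam : -(1 / 2) ≤ lam) (hD : Convex ℝ D)
    (hpos : ∀ x ∈ D, 0 < x + a ∧ 0 < x + b ∧ 0 < x + c)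
    (h : 0 ≤ lam → ∀ x ∈ interior D,
      (1 - 2 * lam) / (x + a) ≤ 4 * (1 / (x + b) + 1 / (x + c))) :
    ConvexOn ℝ D (fun x ↦ (x + a) ^ (2 * lam) * (x + b) ^ 2 * (x + c) ^ 2) := by
  have hconv : ConvexOn ℝ D (fun x ↦ ∏ i, (x + ![a, b, c] i) ^ ![2 * lam, 2, 2] i) := by
    refine convexOn_prod_add_rpow hD
      (fun x hx ↦ by simpa [Fin.forall_fin_succ] using hpos x hx) fun x hx ↦ ?_
    obtain ⟨ha, hb, hc⟩ := hpos x (interior_subset hx)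
    simp only [Fin.sum_univ_three, Matrix.cons_val]
    have hsq := mul_sq_add_sq_add_sq_le_two_mul_sq hlam (one_div_pos.2 ha).le
      (one_div_pos.2 hb).le (one_div_pos.2 hc).le fun h0 ↦ by
        simpa only [mul_one_div] using h h0 x hx
    simp only [div_eq_mul_inv, one_mul, ← inv_pow] at hsq ⊢
    linear_combination 2 * hsq
  simpa [Fin.prod_univ_three] using hconv

end RpowMulSqMulSq

section F1F2

variable {lam : ℝ}

/-- The function `F₁` of the theorem, with `lam` for `λ`: the real power falls on the unshifted
factor `x`. -/
noncomputable def F1 (lam x : ℝ) : ℝ := x ^ (2 * lam) * (x + lam / 2) ^ 2 * (x + lam) ^ 2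

/-- The function `F₂` of the theorem, with `lam` for `λ`: the real power falls on the shifted
factor `x + λ`. -/
noncomputable def F2 (lam x : ℝ) : ℝ := x ^ 2 * (x + lam / 2) ^ 2 * (x + lam) ^ (2 * lam)

lemma F1_eq : F1 lam = fun x ↦ (x + 0) ^ (2 * lam) * (x + lam / 2) ^ 2 * (x + lam) ^ 2 := by
  simp only [F1, add_zero, funext_iff, implies_true]

lemma F2_eq : F2 lam = fun x ↦ (x + lam) ^ (2 * lam) * (x + 0) ^ 2 * (x + lam / 2) ^ 2 := by
  funext x
  rw [F2, add_zero]
  ring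

theorem convexOn_F1 (hlam : -(1 / 2) < lam) : ConvexOn ℝ (Ici (1 / 2)) (F1 lam) := by
  rw [F1_eq]
  refine convexOn_add_rpow_mul_sq_mul_sq hlam.le (convex_Ici _)
    (fun x (hx : 1 / 2 ≤ x) ↦ ⟨by linarith, by linarith, by linarith⟩) fun h0 x hx ↦ ?_
  rw [interior_Ici, mem_Ioi] at hx
  have hx0 : 0 < x := by linarith
  have hmid : 0 < 1 / (x + lam / 2) := by positivity
  have hlast : 0 < 1 / (x + lam) := by positivity
  have hfirst : (1 - 2 * lam) / (x + 0) ≤ 1 / (x + lam) := by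
    rw [add_zero, div_le_div_iff₀ hx0 (by positivity)]
    linear_combination mul_nonneg h0 (by linarith : 0 ≤ 2 * x - 1) + 2 * sq_nonneg lam
  linarith

theorem monotoneOn_F1 (hlam : -1 ≤ lam) : MonotoneOn (F1 lam) (Ioi (max 0 (-lam))) := by
  have hpos : ∀ x ∈ Ioi (max 0 (-lam)), 0 < x + 0 ∧ 0 < x + lam / 2 ∧ 0 < x + lam := by
    intro x hx
    obtain ⟨hx0, hx1⟩ := max_lt_iff.1 (mem_Ioi.1 hx)
    exact ⟨by linarith, by linarith, by linarith⟩
  rw [F1_eq]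
  refine monotoneOn_add_rpow_mul_sq_mul_sq (convex_Ioi _) hpos fun x hx ↦ ?_
  obtain ⟨hfirst, hmid, hlast⟩ := hpos x (interior_subset hx)
  have hsum : 0 ≤ lam / (x + 0) + 1 / (x + lam) := by
    rw [div_add_div _ _ hfirst.ne' hlast.ne']
    refine div_nonneg ?_ (by positivity)
    linear_combination mul_nonneg hfirst.le (by linarith : 0 ≤ 1 + lam) + sq_nonneg lam
  linarith [one_div_pos.2 hmid]

theorem convexOn_F2 (hlam : -(1 / 2) ≤ lam) : ConvexOn ℝ (Ioi (max 0 (-lam))) (F2 lam) := by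
  have hpos : ∀ x ∈ Ioi (max 0 (-lam)), 0 < x + lam ∧ 0 < x + 0 ∧ 0 < x + lam / 2 := by
    intro x hx
    obtain ⟨hx0, hx1⟩ := max_lt_iff.1 (mem_Ioi.1 hx)
    exact ⟨by linarith, by linarith, by linarith⟩
  rw [F2_eq]
  refine convexOn_add_rpow_mul_sq_mul_sq hlam (convex_Ioi _) hpos fun h0 x hx ↦ ?_
  obtain ⟨-, hfirst, hmid⟩ := hpos x (interior_subset hx)
  have hle : (1 - 2 * lam) / (x + lam) ≤ 1 / (x + 0) :=
    div_le_div₀ zero_le_one (by linarith) hfirst (by linarith)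
  linarith [one_div_pos.2 hfirst, one_div_pos.2 hmid]

theorem monotoneOn_F2 (hlam : -(1 / 2) ≤ lam) : MonotoneOn (F2 lam) (Ici 1) := by
  have hpos : ∀ x ∈ Ici (1 : ℝ), 0 < x + lam ∧ 0 < x + 0 ∧ 0 < x + lam / 2 :=
    fun x (hx : 1 ≤ x) ↦ ⟨by linarith, by linarith, by linarith⟩
  rw [F2_eq]
  refine monotoneOn_add_rpow_mul_sq_mul_sq (convex_Ici _) hpos fun x hx ↦ ?_
  obtain ⟨hlast, hfirst, hmid⟩ := hpos x (interior_subset hx)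
  have hx1 : 1 ≤ x := interior_subset hx
  have hsum : 0 ≤ lam / (x + lam) + 1 / (x + 0) := by
    rw [div_add_div _ _ hlast.ne' hfirst.ne']
    refine div_nonneg ?_ (by positivity)
    linear_combination mul_nonneg (sub_nonneg.2 hx1) (by linarith : 0 ≤ 1 + lam) + 2 * hlam
  linarith [one_div_pos.2 hmid]

end F1F2

theorem F1_F2_convex_increasing (lam : ℝ) (hlam : -(1/2 : ℝ) < lam) :
    ConvexOn ℝ (Set.Ici (1/2 : ℝ))
      (fun x : ℝ => x ^ (2*lam) * (x + lam/2)^2 * (x + lam)^2) ∧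
    MonotoneOn (fun x : ℝ => x ^ (2*lam) * (x + lam/2)^2 * (x + lam)^2) (Set.Ici (1 : ℝ)) ∧
    ConvexOn ℝ (Set.Ici (1/2 : ℝ))
      (fun x : ℝ => x^2 * (x + lam/2)^2 * (x + lam) ^ (2*lam)) ∧
    MonotoneOn (fun x : ℝ => x^2 * (x + lam/2)^2 * (x + lam) ^ (2*lam)) (Set.Ici (1 : ℝ)) := by
  have hhalf : Ici (1 / 2) ⊆ Ioi (max 0 (-lam)) :=
    Ici_subset_Ioi.2 (max_lt (by norm_num) (by linarith))
  have hone : Ici 1 ⊆ Ioi (max 0 (-lam)) := (Ici_subset_Ici.2 (by norm_num)).trans hhalf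
  exact ⟨convexOn_F1 hlam, (monotoneOn_F1 (by linarith)).mono hone,
    (convexOn_F2 hlam.le).subset hhalf (convex_Ici _), monotoneOn_F2 hlam.le⟩
end

section
/- Let λ > 2 and m ≥ 1. Then the maximum absolute row-sum norm of the matrix A_m satisfies ‖A_m‖_∞ ≤ (4/((λ+2)(λ+3)))·m(m + λ/2)(m + λ)(m + 3λ/2 + 3). -/
/-!
Write `S k = α_1² + ⋯ + α_k²`. The Gamma functions telescope, so `S k` has a closed form and the
diagonal entry `S k * β_k²` is the cubic `4 k (k + λ/2) (k + λ) / (2λ + 1)`. The part of row `k` up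
to the diagonal is compared with the diagonal entry through two-sided bounds on the ratios of
consecutive values of `S j * β_j`. Past the diagonal the entries are multiples of `β_j`, and
`(j + λ) β_{j+1} ≤ (j + 1) β_j` makes `(λ - 2) R m + (m + 1) S k β_k β_m` nonincreasing in `m ≥ k`,
where `R m` is the sum of the first `m` entries of row `k`. Eliminating the last entry gives the
recursion `(m + λ) R (m+1) ≤ (m + 2) R m + const`, of which the asserted bound is a supersolution.
-/

namespace Gegenbauer

section Sequences

lemma mul_le_mul_of_sq_mul_eq {a b c d p q : ℝ} (hp : 0 < p) (hbd : 0 ≤ d * b)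
    (hab : a ^ 2 * p = b ^ 2 * q) (hcd : c ^ 2 * q ≤ d ^ 2 * p) : c * a ≤ d * b := by
  refine le_of_sq_le_sq (le_of_mul_le_mul_right ?_ hp) hbd
  calc (c * a) ^ 2 * p = b ^ 2 * (c ^ 2 * q) := by linear_combination c ^ 2 * hab
    _ ≤ b ^ 2 * (d ^ 2 * p) := by gcongr
    _ = (d * b) ^ 2 * p := by ring

variable {b : ℕ → ℝ} {c : ℝ}

lemma mul_sum_range_succ_le (h0 : 0 ≤ c * b 0) (hb : ∀ k : ℕ, (k + c) * b k ≤ k * b (k + 1))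
    (k : ℕ) : (c + 1) * ∑ j ∈ Finset.range k, b (j + 1) ≤ (k + c) * b k := by
  induction k with
  | zero => simpa using h0
  | succ k ih =>
    rw [Finset.sum_range_succ]
    push_cast
    linarith [hb k]

lemma le_mul_sum_range_succ (hb : ∀ k : ℕ, (k - c) * b (k + 1) ≤ k * b k) (k : ℕ) :
    k * b k ≤ (c + 1) * ∑ j ∈ Finset.range k, b (j + 1) := by
  induction k with
  | zero => simp
  | succ k ih =>
    rw [Finset.sum_range_succ]
    push_cast
    linarith [hb k]

end Sequences

lemma Gamma_add_two {x : ℝ} (hx : 0 < x) :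
    Real.Gamma (x + 2) = (x + 1) * x * Real.Gamma x := by
  rw [show x + 2 = (x + 1) + 1 by ring, Real.Gamma_add_one (by linarith),
    Real.Gamma_add_one hx.ne', mul_assoc]

variable {lam : ℝ}

lemma hsq_pos (hlam : 0 < lam) {x : ℝ} (hx : 0 ≤ x) : 0 < hsq lam x :=
  div_pos (Real.Gamma_pos_of_pos (by linarith))
    (mul_pos (by linarith) (Real.Gamma_pos_of_pos (by linarith)))

section Coefficients

lemma gegAlpha_succ_sq (hlam : 0 < lam) (k : ℕ) :
    gegAlpha lam (k + 1) ^ 2 =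
      (2 * k + 1 + lam) * Real.Gamma (2 * k + 1 + 2 * lam) / Real.Gamma (2 * k + 2) := by
  have hodd : 2 * ((k + 1 : ℕ) : ℝ) - 1 = 2 * k + 1 := by push_cast; ring
  rw [gegAlpha, hodd, mul_pow, Real.sq_sqrt (hsq_pos hlam (by positivity)).le, hsq, add_assoc _ 1 1,
    one_add_one_eq_two]
  field_simp

lemma gegBeta_pos (hlam : 0 < lam) (k : ℕ) : 0 < gegBeta lam k :=
  one_div_pos.2 (Real.sqrt_pos.2 (hsq_pos hlam (by positivity)))

lemma gegBeta_sq (hlam : 0 < lam) (k : ℕ) :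
    gegBeta lam k ^ 2 =
      (2 * k + lam) * Real.Gamma (2 * k + 1) / Real.Gamma (2 * k + 2 * lam) := by
  rw [gegBeta, div_pow, Real.sq_sqrt (hsq_pos hlam (by positivity)).le, hsq, one_pow, one_div_div]

lemma gegBeta_succ_sq_mul (hlam : 0 < lam) (k : ℕ) :
    gegBeta lam (k + 1) ^ 2 * ((2 * k + lam) * (k + lam) * (2 * k + 2 * lam + 1)) =
      gegBeta lam k ^ 2 * ((2 * k + 2 + lam) * (2 * k + 1) * (k + 1)) := by
  have hnum := Gamma_add_two (x := 2 * k + 1) (by positivity)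
  have hden := Gamma_add_two (x := 2 * k + 2 * lam) (by positivity)
  rw [gegBeta_sq hlam, gegBeta_sq hlam]
  push_cast
  rw [show 2 * ((k : ℝ) + 1) + 1 = 2 * k + 1 + 2 by ring, hnum,
    show 2 * ((k : ℝ) + 1) + 2 * lam = 2 * k + 2 * lam + 2 by ring, hden]
  field_simp
  ring

lemma add_mul_gegBeta_succ_le (hlam : 1 ≤ lam) (k : ℕ) :
    (k + lam) * gegBeta lam (k + 1) ≤ (k + 1) * gegBeta lam k := by
  have h0 : 0 < lam := by linarith
  have hβ := gegBeta_pos h0 k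
  refine mul_le_mul_of_sq_mul_eq (by positivity) (by positivity) (gegBeta_succ_sq_mul h0 k) ?_
  have hpoly : (k + lam) * ((2 * k + 2 + lam) * (2 * k + 1)) ≤
      (k + 1) * ((2 * k + lam) * (2 * k + 2 * lam + 1)) := by
    nlinarith [mul_nonneg h0.le (sub_nonneg.2 hlam)]
  calc _ = (k + 1) * (k + lam) * ((k + lam) * ((2 * k + 2 + lam) * (2 * k + 1))) := by ring
    _ ≤ (k + 1) * (k + lam) * ((k + 1) * ((2 * k + lam) * (2 * k + 2 * lam + 1))) := by gcongr
    _ = _ := by ring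

lemma mul_gegBeta_le_mul_gegBeta_succ (hlam : 0 < lam) (k : ℕ) :
    (k + lam + 2) * (2 * k + 1) * gegBeta lam k ≤
      (k + 1 + lam) * (2 * k + 1 + 2 * lam) * gegBeta lam (k + 1) := by
  have hβ := gegBeta_pos hlam (k + 1)
  refine mul_le_mul_of_sq_mul_eq (by positivity) (by positivity)
    (gegBeta_succ_sq_mul hlam k).symm ?_
  have hpoly : (k + lam + 2) ^ 2 * ((2 * k + 1) * ((2 * k + lam) * (k + lam))) ≤
      (k + 1 + lam) ^ 2 * ((2 * k + 1 + 2 * lam) * ((2 * k + 2 + lam) * (k + 1))) := by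
    rw [← sub_nonneg]
    ring_nf
    positivity
  calc _ = (2 * k + 1) * (2 * k + 1 + 2 * lam) *
        ((k + lam + 2) ^ 2 * ((2 * k + 1) * ((2 * k + lam) * (k + lam)))) := by ring
    _ ≤ (2 * k + 1) * (2 * k + 1 + 2 * lam) *
        ((k + 1 + lam) ^ 2 * ((2 * k + 1 + 2 * lam) * ((2 * k + 2 + lam) * (k + 1)))) := by gcongr
    _ = _ := by ring

end Coefficients

/-- The partial sum `S k = α_1² + ⋯ + α_k²`, which enters every entry `S (min k j) * β_k * β_j`
of `A_m`. -/
noncomputable def alphaSqSum (lam : ℝ) (k : ℕ) : ℝ :=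
  ∑ i ∈ Finset.Icc 1 k, gegAlpha lam i ^ 2

section AlphaSqSum

lemma alphaSqSum_nonneg (k : ℕ) : 0 ≤ alphaSqSum lam k :=
  Finset.sum_nonneg fun _ _ => sq_nonneg _

@[simp]
lemma alphaSqSum_zero : alphaSqSum lam 0 = 0 := rfl

lemma alphaSqSum_succ (k : ℕ) :
    alphaSqSum lam (k + 1) = alphaSqSum lam k + gegAlpha lam (k + 1) ^ 2 :=
  Finset.sum_Icc_succ_top (by omega) _

lemma alphaSqSum_eq (hlam : 0 < lam) (k : ℕ) :
    alphaSqSum lam k =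
      k * Real.Gamma (2 * k + 1 + 2 * lam) / ((2 * lam + 1) * Real.Gamma (2 * k + 1)) := by
  induction k with
  | zero => simp
  | succ k ih =>
    have hnum := Gamma_add_two (x := 2 * k + 1 + 2 * lam) (by positivity)
    have hden := Gamma_add_two (x := 2 * k + 1) (by positivity)
    have hα := Real.Gamma_add_one (s := 2 * k + 1) (by positivity)
    rw [alphaSqSum_succ, ih, gegAlpha_succ_sq hlam]
    push_cast
    rw [show 2 * ((k : ℝ) + 1) + 1 + 2 * lam = 2 * k + 1 + 2 * lam + 2 by ring, hnum,
      show 2 * ((k : ℝ) + 1) + 1 = 2 * k + 1 + 2 by ring, hden,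
      show 2 * (k : ℝ) + 2 = 2 * k + 1 + 1 by ring, hα]
    field_simp
    ring

lemma mul_alphaSqSum_succ (hlam : 0 < lam) (k : ℕ) :
    k * (2 * k + 1) * alphaSqSum lam (k + 1) =
      (k + 1 + lam) * (2 * k + 1 + 2 * lam) * alphaSqSum lam k := by
  have hnum := Gamma_add_two (x := 2 * k + 1 + 2 * lam) (by positivity)
  have hden := Gamma_add_two (x := 2 * k + 1) (by positivity)
  rw [alphaSqSum_eq hlam, alphaSqSum_eq hlam]
  push_cast
  rw [show 2 * ((k : ℝ) + 1) + 1 + 2 * lam = 2 * k + 1 + 2 * lam + 2 by ring, hnum,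
    show 2 * ((k : ℝ) + 1) + 1 = 2 * k + 1 + 2 by ring, hden]
  field_simp
  ring

lemma alphaSqSum_mul_gegBeta_sq (hlam : 0 < lam) (k : ℕ) :
    alphaSqSum lam k * gegBeta lam k ^ 2 =
      4 / (2 * lam + 1) * (k * (k + lam / 2) * (k + lam)) := by
  rw [alphaSqSum_eq hlam, gegBeta_sq hlam, add_right_comm, Real.Gamma_add_one (by positivity)]
  field_simp
  ring

lemma add_mul_alphaSqSum_mul_gegBeta_le (hlam : 0 < lam) (k : ℕ) :
    (k + (lam + 2)) * (alphaSqSum lam k * gegBeta lam k) ≤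
      k * (alphaSqSum lam (k + 1) * gegBeta lam (k + 1)) := by
  have hS := alphaSqSum_nonneg (lam := lam) k
  refine le_of_mul_le_mul_right (a := 2 * (k : ℝ) + 1) ?_ (by positivity)
  calc _ = alphaSqSum lam k * ((k + lam + 2) * (2 * k + 1) * gegBeta lam k) := by ring
    _ ≤ alphaSqSum lam k *
        ((k + 1 + lam) * (2 * k + 1 + 2 * lam) * gegBeta lam (k + 1)) :=
      mul_le_mul_of_nonneg_left (mul_gegBeta_le_mul_gegBeta_succ hlam k) hS
    _ = _ := by linear_combination -gegBeta lam (k + 1) * mul_alphaSqSum_succ hlam k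

lemma sub_mul_alphaSqSum_succ_mul_gegBeta_succ_le (hlam : 1 ≤ lam) (k : ℕ) :
    (k - (lam + 2)) * (alphaSqSum lam (k + 1) * gegBeta lam (k + 1)) ≤
      k * (alphaSqSum lam k * gegBeta lam k) := by
  have h0 : 0 < lam := by linarith
  have hS := alphaSqSum_nonneg (lam := lam)
  have hβ := gegBeta_pos h0
  have hk := mul_nonneg (Nat.cast_nonneg (α := ℝ) k) (mul_nonneg (hS k) (hβ k).le)
  rcases le_or_gt (k - (lam + 2)) 0 with hneg | hpos
  · exact (mul_nonpos_of_nonpos_of_nonneg hneg (mul_nonneg (hS _) (hβ _).le)).trans hk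
  have hk0 : (0 : ℝ) < k := by linarith
  have hpoly : (k - (lam + 2)) * (k + 1 + lam) * (2 * k + 1 + 2 * lam) * (k + 1) ≤
      k * (k * (2 * k + 1) * (k + lam)) := by
    rw [← sub_nonneg]
    ring_nf
    positivity
  refine le_of_mul_le_mul_right (a := k * (2 * k + 1) * (k + lam)) ?_ (by positivity)
  calc _ = (k - (lam + 2)) * (k + 1 + lam) * (2 * k + 1 + 2 * lam) * alphaSqSum lam k *
        ((k + lam) * gegBeta lam (k + 1)) := by
        linear_combination (k - (lam + 2)) * (k + lam) * gegBeta lam (k + 1) *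
          mul_alphaSqSum_succ h0 k
    _ ≤ (k - (lam + 2)) * (k + 1 + lam) * (2 * k + 1 + 2 * lam) * alphaSqSum lam k *
        ((k + 1) * gegBeta lam k) :=
      mul_le_mul_of_nonneg_left (add_mul_gegBeta_succ_le hlam k)
        (mul_nonneg (by positivity) (hS k))
    _ = (k - (lam + 2)) * (k + 1 + lam) * (2 * k + 1 + 2 * lam) * (k + 1) *
        (alphaSqSum lam k * gegBeta lam k) := by ring
    _ ≤ k * (k * (2 * k + 1) * (k + lam)) * (alphaSqSum lam k * gegBeta lam k) :=
      mul_le_mul_of_nonneg_right hpoly (mul_nonneg (hS k) (hβ k).le)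
    _ = _ := by ring

end AlphaSqSum

/-- The sum of the first `m` entries of row `k`, in the 1-based numbering of rows and columns, of
the infinite matrix that extends every `A_m`. -/
noncomputable def rowSum (lam : ℝ) (k m : ℕ) : ℝ :=
  ∑ j ∈ Finset.range m,
    alphaSqSum lam (min k (j + 1)) * gegBeta lam k * gegBeta lam (j + 1)

/-- The polynomial that bounds every row sum of `A_m` when evaluated at `x = m`. -/
noncomputable def rowBound (lam x : ℝ) : ℝ :=
  4 / ((lam + 2) * (lam + 3)) * (x * (x + lam / 2) * (x + lam) * (x + 3 * lam / 2 + 3))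

section RowSum

lemma sum_abs_Amat (hlam : 0 < lam) {m : ℕ} (k : Fin m) :
    ∑ j, |Amat lam m k j| = rowSum lam (k + 1) m := by
  have habs (j : Fin m) : |Amat lam m k j| =
      alphaSqSum lam (min (k + 1) (j + 1)) * gegBeta lam (k + 1) * gegBeta lam (j + 1) :=
    abs_of_nonneg (mul_nonneg (mul_nonneg (alphaSqSum_nonneg _) (gegBeta_pos hlam _).le)
      (gegBeta_pos hlam _).le)
  simp_rw [habs]
  exact Fin.sum_univ_eq_sum_range (fun j => alphaSqSum lam (min (k + 1) (j + 1)) *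
    gegBeta lam (k + 1) * gegBeta lam (j + 1)) m

lemma rowSum_succ {k m : ℕ} (hkm : k ≤ m) :
    rowSum lam k (m + 1) =
      rowSum lam k m + alphaSqSum lam k * gegBeta lam k * gegBeta lam (m + 1) := by
  rw [rowSum, Finset.sum_range_succ, min_eq_left (by omega), ← rowSum]

lemma rowSum_self (k : ℕ) :
    rowSum lam k k =
      (∑ j ∈ Finset.range k, alphaSqSum lam (j + 1) * gegBeta lam (j + 1)) * gegBeta lam k := by
  rw [rowSum, Finset.sum_mul]
  refine Finset.sum_congr rfl fun j hj => ?_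
  rw [min_eq_right (Finset.mem_range.1 hj), mul_right_comm]

lemma mul_rowSum_self_le (hlam : 0 < lam) (k : ℕ) :
    (lam + 3) * rowSum lam k k ≤ (k + (lam + 2)) * (alphaSqSum lam k * gegBeta lam k ^ 2) := by
  have hsum := mul_sum_range_succ_le (b := fun j => alphaSqSum lam j * gegBeta lam j)
    (by simp) (add_mul_alphaSqSum_mul_gegBeta_le hlam) k
  rw [rowSum_self]
  linarith [mul_le_mul_of_nonneg_right hsum (gegBeta_pos hlam k).le]

lemma le_mul_rowSum_self (hlam : 1 ≤ lam) (k : ℕ) :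
    k * (alphaSqSum lam k * gegBeta lam k ^ 2) ≤ (lam + 3) * rowSum lam k k := by
  have hsum := le_mul_sum_range_succ (b := fun j => alphaSqSum lam j * gegBeta lam j)
    (sub_mul_alphaSqSum_succ_mul_gegBeta_succ_le hlam) k
  rw [rowSum_self]
  linarith [mul_le_mul_of_nonneg_right hsum (gegBeta_pos (show 0 < lam by linarith) k).le]

lemma sub_two_mul_rowSum_add_le (hlam : 1 ≤ lam) {k m : ℕ} (hkm : k ≤ m) :
    (lam - 2) * rowSum lam k m + (m + 1) * (alphaSqSum lam k * gegBeta lam k * gegBeta lam m) ≤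
      (lam - 2) * rowSum lam k k + (k + 1) * (alphaSqSum lam k * gegBeta lam k ^ 2) := by
  induction m, hkm using Nat.le_induction with
  | base => exact le_of_eq (by ring)
  | succ m hkm ih =>
    have hnonneg : 0 ≤ alphaSqSum lam k * gegBeta lam k :=
      mul_nonneg (alphaSqSum_nonneg k) (gegBeta_pos (by linarith) k).le
    rw [rowSum_succ hkm]
    push_cast
    linarith [mul_le_mul_of_nonneg_left (add_mul_gegBeta_succ_le hlam m) hnonneg]

lemma sub_two_mul_rowSum_self_add_le (hlam : 1 ≤ lam) (k : ℕ) :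
    (lam + 3) *
        ((lam - 2) * rowSum lam k k + (k + 1) * (alphaSqSum lam k * gegBeta lam k ^ 2)) ≤
      ((2 * lam + 1) * k + (lam + 1) ^ 2) * (alphaSqSum lam k * gegBeta lam k ^ 2) := by
  have hupper := mul_rowSum_self_le (by linarith) k
  have hlower := le_mul_rowSum_self hlam k
  -- With `D` the diagonal entry and `X = (lam + 3) * rowSum lam k k - k * D`, which lies between
  -- `0` and `(lam + 2) * D`: `(lam - 2) * X ≤ (lam - 1) * X ≤ (lam - 1) * (lam + 2) * D`.
  have hexcess := mul_le_mul_of_nonneg_left hupper (sub_nonneg.2 hlam)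
  linarith

lemma add_mul_rowSum_succ_le (hlam : 1 ≤ lam) {k m : ℕ} (hkm : k ≤ m) :
    (m + lam) * rowSum lam k (m + 1) ≤ (m + 2) * rowSum lam k m +
      ((2 * lam + 1) * k + (lam + 1) ^ 2) / (lam + 3) *
        (alphaSqSum lam k * gegBeta lam k ^ 2) := by
  have htail := sub_two_mul_rowSum_add_le hlam (hkm.trans m.le_succ)
  have hself : (lam - 2) * rowSum lam k k + (k + 1) * (alphaSqSum lam k * gegBeta lam k ^ 2) ≤
      ((2 * lam + 1) * k + (lam + 1) ^ 2) / (lam + 3) *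
        (alphaSqSum lam k * gegBeta lam k ^ 2) := by
    rw [div_mul_eq_mul_div, le_div_iff₀' (by linarith)]
    exact sub_two_mul_rowSum_self_add_le hlam k
  have hlast : alphaSqSum lam k * gegBeta lam k * gegBeta lam (m + 1) =
      rowSum lam k (m + 1) - rowSum lam k m := by rw [rowSum_succ hkm]; ring
  rw [hlast] at htail
  push_cast at htail
  linarith

lemma rowSum_self_le_rowBound (hlam : 1 ≤ lam) (k : ℕ) : rowSum lam k k ≤ rowBound lam k := by
  have h0 : 0 < lam := by linarith
  have hself := mul_rowSum_self_le h0 k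
  rw [alphaSqSum_mul_gegBeta_sq h0, ← le_div_iff₀' (by linarith)] at hself
  calc rowSum lam k k ≤ _ := hself
    _ = 4 / ((2 * lam + 1) * (lam + 3)) *
        (k * (k + lam / 2) * (k + lam) * (k + (lam + 2))) := by field_simp
    _ ≤ 4 / ((lam + 2) * (lam + 3)) *
        (k * (k + lam / 2) * (k + lam) * (k + 3 * lam / 2 + 3)) := by
      gcongr 4 / (?_ * _) * (_ * ?_) <;> linarith

lemma add_mul_rowBound_le (hlam : 1 ≤ lam) {x : ℝ} (hx : 0 ≤ x) :
    (x + 2) * rowBound lam x + ((2 * lam + 1) * x + (lam + 1) ^ 2) / (lam + 3) *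
        (4 / (2 * lam + 1) * (x * (x + lam / 2) * (x + lam))) ≤
      (x + lam) * rowBound lam (x + 1) := by
  obtain ⟨t, ht, rfl⟩ : ∃ t, 0 ≤ t ∧ lam = t + 1 := ⟨lam - 1, by linarith, by ring⟩
  rw [← sub_nonneg]
  unfold rowBound
  field_simp
  ring_nf
  positivity

lemma rowSum_le_rowBound (hlam : 1 ≤ lam) {k m : ℕ} (hkm : k ≤ m) :
    rowSum lam k m ≤ rowBound lam m := by
  have h0 : 0 < lam := by linarith
  induction m, hkm using Nat.le_induction with
  | base => exact rowSum_self_le_rowBound hlam k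
  | succ m hkm ih =>
    refine le_of_mul_le_mul_left ?_ (show 0 < (m : ℝ) + lam by positivity)
    calc (m + lam) * rowSum lam k (m + 1)
        ≤ (m + 2) * rowSum lam k m + ((2 * lam + 1) * k + (lam + 1) ^ 2) / (lam + 3) *
            (4 / (2 * lam + 1) * (k * (k + lam / 2) * (k + lam))) := by
          simpa only [alphaSqSum_mul_gegBeta_sq h0] using add_mul_rowSum_succ_le hlam hkm
      _ ≤ (m + 2) * rowBound lam m + ((2 * lam + 1) * m + (lam + 1) ^ 2) / (lam + 3) *
            (4 / (2 * lam + 1) * (m * (m + lam / 2) * (m + lam))) := by gcongr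
      _ ≤ (m + lam) * rowBound lam (m + 1) := add_mul_rowBound_le hlam (by positivity)
      _ = (m + lam) * rowBound lam ((m + 1 : ℕ) : ℝ) := by push_cast; rfl

end RowSum

end Gegenbauer

theorem Amat_rowSumNorm_bound_general (lam : ℝ) (hlam : 1 ≤ lam) (m : ℕ) (hm : 1 ≤ m) :
    rowSumNorm (Amat lam m) ≤
      4/((lam + 2) * (lam + 3)) *
        ((m : ℝ) * ((m : ℝ) + lam/2) * ((m : ℝ) + lam) * ((m : ℝ) + 3*lam/2 + 3)) := by
  have : Nonempty (Fin m) := ⟨⟨0, hm⟩⟩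
  refine ciSup_le fun k => ?_
  rw [Gegenbauer.sum_abs_Amat (by linarith)]
  exact Gegenbauer.rowSum_le_rowBound hlam k.isLt

theorem Amat_rowSumNorm_bound (lam : ℝ) (hlam : 2 < lam) (m : ℕ) (hm : 1 ≤ m) :
    rowSumNorm (Amat lam m) ≤
      4/((lam + 2) * (lam + 3)) *
        ((m : ℝ) * ((m : ℝ) + lam/2) * ((m : ℝ) + lam) * ((m : ℝ) + 3*lam/2 + 3)) :=
  Amat_rowSumNorm_bound_general lam (by linarith) m hm
end
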